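/- arXiv:2306.14323 — 2 statements merged into one kernel-verified Lean document; each statement's English description precedes it below -/
import Mathlib

section
/- Lemma 1 (channel resolvability for superposition random codebooks): If R1 > I(U1;Z|S,U), R2 > I(U2;Z|S,U), and R1 + R2 > I(U1,U2;Z|S,U), then for every choice of pmfs Pbar_n on {1,...,2^{nR0}}, the expectation over the random codebooks of the sum over l of Pbar_n(l) times D( P^n_{ZS|U(l),C1,C2} || P^n_{ZS|U}(.|U(l)) ) converges to 0 exponentially fast as n tends to infinity. -/
/-!
Fix one cloud centre and one transmitted pair `(a, b)` of satellite codewords. Averaging over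
all other codewords, the ratio of the induced to the ideal output law at `y` has conditional mean
at most `t = 1 + W₁/(M₁ Q) + W₂/(M₂ Q) + W/(M₁ M₂ Q)`, where `Q`, `W₁`, `W₂`, `W` are the output
laws given none, the first, the second, or both of the codewords (`expect_weighted_induced_le`).
By concavity of the logarithm the expected divergence is at most the mean of `log t`
(`expect_log_le`), and `log (1 + x) ≤ x ^ α / α` for `0 < α ≤ 1` bounds it by three moments of
order `α` of likelihood ratios (`expect_KL_le`).

For product laws each moment is the `n`-th power of a single-letter moment (`moment_tensor`).
The derivative at `α = 0` of the logarithm of the single-letter moment is the corresponding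
conditional mutual information (`cMI_u1`, `cMI_u2`, `cMI_u12`), so for small `α > 0` the rate
condition makes `2 ^ (-α R)` times the moment less than one (`eventually_moment_lt_one`). All three
terms therefore decay geometrically, and no typicality argument is needed. Since clouds are i.i.d.,
the weights `Pbar n` play no role beyond summing to one (`sum_cbProb_KL`); the expectation is
nonnegative by Gibbs' inequality (`expect_KL_nonneg`), which disposes of the absolute value.
-/

open scoped BigOperators

noncomputable section

namespace Paper

/-- `p` is a probability mass function on the finite type `α`. -/
def IsPmf {α : Type*} [Fintype α] (p : α → ℝ) : Prop :=
  (∀ a, 0 ≤ p a) ∧ ∑ a, p a = 1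

/-- `k` is a conditional pmf (a channel / stochastic kernel). -/
def IsKernel {α β : Type*} [Fintype β] (k : α → β → ℝ) : Prop :=
  ∀ a, IsPmf (k a)

/-- Shannon entropy (base 2) of a mass function on a finite type. -/
def ent {α : Type*} [Fintype α] (p : α → ℝ) : ℝ :=
  -∑ a, p a * Real.logb 2 (p a)

/-- Law (pushforward) of the random variable `X` under the mass function `p`. -/
def law {Ω α : Type*} [Fintype Ω] [DecidableEq α] (p : Ω → ℝ) (X : Ω → α) :
    α → ℝ := fun a => ∑ ω, if X ω = a then p ω else 0

/-- Entropy `H(X)` of a random variable `X`. -/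
def H {Ω α : Type*} [Fintype Ω] [Fintype α] [DecidableEq α] (p : Ω → ℝ)
    (X : Ω → α) : ℝ := ent (law p X)

/-- Conditional entropy `H(X|Y)`. -/
def Hc {Ω α β : Type*} [Fintype Ω] [Fintype α] [Fintype β] [DecidableEq α]
    [DecidableEq β] (p : Ω → ℝ) (X : Ω → α) (Y : Ω → β) : ℝ :=
  H p (fun ω => (X ω, Y ω)) - H p Y

/-- Mutual information `I(X;Y)`. -/
def MI {Ω α β : Type*} [Fintype Ω] [Fintype α] [Fintype β] [DecidableEq α]
    [DecidableEq β] (p : Ω → ℝ) (X : Ω → α) (Y : Ω → β) : ℝ :=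
  H p X + H p Y - H p (fun ω => (X ω, Y ω))

/-- Conditional mutual information `I(X;Y|Z)`. -/
def cMI {Ω α β γ : Type*} [Fintype Ω] [Fintype α] [Fintype β] [Fintype γ]
    [DecidableEq α] [DecidableEq β] [DecidableEq γ] (p : Ω → ℝ) (X : Ω → α)
    (Y : Ω → β) (Z : Ω → γ) : ℝ :=
  Hc p X Z - Hc p X (fun ω => (Y ω, Z ω))

/-- Kullback–Leibler divergence (base 2). -/
def KL {α : Type*} [Fintype α] (p q : α → ℝ) : ℝ :=
  ∑ a, p a * Real.logb 2 (p a / q a)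

/-- Binary entropy function. -/
def hb (x : ℝ) : ℝ := -(x * Real.logb 2 x) - (1 - x) * Real.logb 2 (1 - x)

/-- A (message-indexed) encoder is causal: its `j`-th output symbol depends only on the
first `j` state symbols. -/
def Causal {M A B : Type*} {n : ℕ} (e : M → (Fin n → A) → Fin n → B) : Prop :=
  ∀ m s s' j, (∀ i, i ≤ j → s i = s' i) → e m s j = e m s' j

/-- A strictly causal encoder: its `j`-th output symbol depends only on the state symbols
strictly before `j`. -/
def StrictlyCausal {M A B : Type*} {n : ℕ} (e : M → (Fin n → A) → Fin n → B) : Prop :=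
  ∀ m s s' j, (∀ i, i < j → s i = s' i) → e m s j = e m s' j

/-- Sample space carrying the single-letter random variables `(U,U1,U2,S,Z)`. -/
abbrev O5Z (U U1 U2 AS AZ : Type) : Type := U × U1 × U2 × AS × AZ

namespace O5Z
variable {U U1 U2 AS AZ : Type}
def u (ω : O5Z U U1 U2 AS AZ) : U := ω.1
def u1 (ω : O5Z U U1 U2 AS AZ) : U1 := ω.2.1
def u2 (ω : O5Z U U1 U2 AS AZ) : U2 := ω.2.2.1
def s (ω : O5Z U U1 U2 AS AZ) : AS := ω.2.2.2.1
def z (ω : O5Z U U1 U2 AS AZ) : AZ := ω.2.2.2.2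
end O5Z

variable {U U1 U2 AS AZ : Type} [Fintype U] [Fintype U1] [Fintype U2] [Fintype AS]
  [Fintype AZ] [DecidableEq U] [DecidableEq U1] [DecidableEq U2] [DecidableEq AS]
  [DecidableEq AZ]

/-- The single-letter joint law `P_S P_U P_{U1|U} P_{U2|U} P_{Z|UU1U2S}`. -/
def slJointZ (PU : U → ℝ) (PU1 : U → U1 → ℝ) (PU2 : U → U2 → ℝ) (PS : AS → ℝ)
    (PZ : U → U1 → U2 → AS → AZ → ℝ) : O5Z U U1 U2 AS AZ → ℝ :=
  fun ω => PS ω.s * PU ω.u * PU1 ω.u ω.u1 * PU2 ω.u ω.u2 * PZ ω.u ω.u1 ω.u2 ω.s ω.z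

/-- The probability of drawing the superposition codebook realization `(c, c1, c2)`:
cloud centers i.i.d. `P_U^n`, satellites i.i.d. `P_{U1|U}^n` resp. `P_{U2|U}^n`. -/
def cbProb (PU : U → ℝ) (PU1 : U → U1 → ℝ) (PU2 : U → U2 → ℝ) {m0 m1 m2 n : ℕ}
    (c : Fin m0 → Fin n → U) (c1 : Fin m0 → Fin m1 → Fin n → U1)
    (c2 : Fin m0 → Fin m2 → Fin n → U2) : ℝ :=
  (∏ l, ∏ i, PU (c l i)) * (∏ l, ∏ l1, ∏ i, PU1 (c l i) (c1 l l1 i)) *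
    ∏ l, ∏ l2, ∏ i, PU2 (c l i) (c2 l l2 i)

/-- The output-plus-state distribution `P^n_{ZS|U(l),C1,C2}` induced by a codebook
realization and the cloud index `l` (uniform satellite indices). -/
def inducedZS (PS : AS → ℝ) (PZ : U → U1 → U2 → AS → AZ → ℝ) {m0 m1 m2 n : ℕ}
    (c : Fin m0 → Fin n → U) (c1 : Fin m0 → Fin m1 → Fin n → U1)
    (c2 : Fin m0 → Fin m2 → Fin n → U2) (l : Fin m0) :
    (Fin n → AZ) × (Fin n → AS) → ℝ :=
  fun zs => ((m1 : ℝ) * (m2 : ℝ))⁻¹ * ∑ l1, ∑ l2,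
    ∏ i, PZ (c l i) (c1 l l1 i) (c2 l l2 i) (zs.2 i) (zs.1 i) * PS (zs.2 i)

/-- The ideal output-plus-state distribution `P^n_{ZS|U}(· | u)`. -/
def idealZS (PU1 : U → U1 → ℝ) (PU2 : U → U2 → ℝ) (PS : AS → ℝ)
    (PZ : U → U1 → U2 → AS → AZ → ℝ) {n : ℕ} (u : Fin n → U) :
    (Fin n → AZ) × (Fin n → AS) → ℝ :=
  fun zs => ∑ u1 : Fin n → U1, ∑ u2 : Fin n → U2,
    (∏ i, PU1 (u i) (u1 i)) * (∏ i, PU2 (u i) (u2 i)) *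
      ∏ i, PZ (u i) (u1 i) (u2 i) (zs.2 i) (zs.1 i) * PS (zs.2 i)

set_option linter.unusedSectionVars false

/-! ### Expectations over i.i.d. codebooks -/

/-- Marginalisation: under independent coordinates, the expectation of a function of one
coordinate only sees the law of that coordinate. -/
theorem sum_prod_marginal {ι X : Type*} [Fintype ι] [DecidableEq ι] [Fintype X]
    (p : ι → X → ℝ) (hp : ∀ i, ∑ x, p i x = 1) (l : ι) (F : X → ℝ) :
    ∑ c : ι → X, (∏ i, p i (c i)) * F (c l) = ∑ x, p l x * F x := by
  have h : ∀ c : ι → X, (∏ i, p i (c i)) * F (c l)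
      = ∏ i, (p i (c i) * if i = l then F (c i) else 1) := by
    intro _
    rw [Finset.prod_mul_distrib]
    simp
  simp_rw [h]
  rw [← Fintype.piFinset_univ, ← Finset.prod_univ_sum (fun _ => Finset.univ)
    (fun i x => p i x * if i = l then F x else 1), Finset.prod_eq_single l]
  · simp
  · intro i _ hi
    simp [hi, hp]
  · simp

theorem sum_prod_eq_one {ι X : Type*} [Fintype ι] [DecidableEq ι] [Fintype X]
    (p : ι → X → ℝ) (hp : ∀ i, ∑ x, p i x = 1) :
    ∑ c : ι → X, ∏ i, p i (c i) = 1 := by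
  rw [← Fintype.piFinset_univ, ← Finset.prod_univ_sum (fun _ => Finset.univ) p]
  simp [hp]

theorem sum_prod_pair {ι X : Type*} [Fintype ι] [DecidableEq ι] [Fintype X] [DecidableEq X]
    (p : X → ℝ) (hp : ∑ x, p x = 1) {l j : ι} (hlj : l ≠ j) (F : X → X → ℝ) :
    ∑ c : ι → X, (∏ i, p (c i)) * F (c l) (c j) = ∑ a, ∑ b, p a * p b * F a b := by
  have key : ∀ f g : X → ℝ, ∑ c : ι → X, (∏ i, p (c i)) * (f (c l) * g (c j))
      = (∑ x, p x * f x) * ∑ x, p x * g x := by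
    intro f g
    have h : ∀ c : ι → X, (∏ i, p (c i)) * (f (c l) * g (c j))
        = ∏ i, (p (c i) * ((if i = l then f (c i) else 1) *
            if i = j then g (c i) else 1)) := by
      intro c
      rw [Finset.prod_mul_distrib, Finset.prod_mul_distrib]
      simp
    simp_rw [h]
    rw [← Fintype.piFinset_univ, ← Finset.prod_univ_sum (fun _ => Finset.univ)
      (fun i x => p x * ((if i = l then f x else 1) * if i = j then g x else 1))]
    have h2 : ∀ i, (∑ x, p x * ((if i = l then f x else 1) * if i = j then g x else 1))
        = (if i = l then ∑ x, p x * f x else 1) * (if i = j then ∑ x, p x * g x else 1) := by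
      intro i
      by_cases h1 : i = l
      · subst h1
        simp [hlj]
      · by_cases h3 : i = j
        · simp [h3, hlj.symm]
        · simp [h1, h3, hp]
    simp_rw [h2]
    rw [Finset.prod_mul_distrib]
    simp
  have h3 : ∀ c : ι → X, (∏ i, p (c i)) * F (c l) (c j)
      = ∑ a, (∏ i, p (c i)) * ((if c l = a then 1 else 0) * F a (c j)) := by
    intro c
    simp
  simp_rw [h3]
  rw [Finset.sum_comm]
  refine Finset.sum_congr rfl fun a _ => ?_
  rw [key (fun x => if x = a then 1 else 0) (F a), Finset.mul_sum]
  simp [mul_assoc]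

/-- A codeword paired with all the codewords of its i.i.d. codebook: the diagonal pair
contributes once, each of the other pairs is a pair of independent codewords. -/
theorem sum_prod_pairs_le {X : Type*} [Fintype X] {M : ℕ}
    (p : X → ℝ) (hp : IsPmf p) (l : Fin M) (F : X → X → ℝ) (hF : ∀ a b, 0 ≤ F a b) :
    ∑ c : Fin M → X, (∏ i, p (c i)) * ∑ j, F (c l) (c j)
      ≤ ∑ a, p a * (F a a + M * ∑ b, p b * F a b) := by
  classical
  have hnn : 0 ≤ ∑ a, ∑ b, p a * p b * F a b :=
    Finset.sum_nonneg fun a _ => Finset.sum_nonneg fun b _ =>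
      mul_nonneg (mul_nonneg (hp.1 a) (hp.1 b)) (hF a b)
  simp_rw [Finset.mul_sum]
  rw [Finset.sum_comm]
  calc ∑ j, ∑ c : Fin M → X, (∏ i, p (c i)) * F (c l) (c j)
      ≤ ∑ j, ((if j = l then ∑ a, p a * F a a else 0) + ∑ a, ∑ b, p a * p b * F a b) := by
        refine Finset.sum_le_sum fun j _ => ?_
        by_cases h : j = l
        · subst h
          rw [sum_prod_marginal (fun _ => p) (fun _ => hp.2) j (fun a => F a a)]
          simpa using hnn
        · rw [sum_prod_pair p hp.2 (Ne.symm h) F]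
          simp [h]
    _ = ∑ a, p a * (F a a + ∑ b, M * (p b * F a b)) := by
        rw [Finset.sum_add_distrib]
        simp only [Finset.sum_ite_eq', Finset.mem_univ, if_true, Finset.sum_const,
          Finset.card_univ, Fintype.card_fin, nsmul_eq_mul, mul_add, Finset.sum_add_distrib]
        congr 1
        simp_rw [Finset.mul_sum]
        refine Finset.sum_congr rfl fun a _ => Finset.sum_congr rfl fun b _ => by ring

/-! ### The one-shot bound -/

section OneShot

variable {A B Y : Type*} [Fintype A] [Fintype B] [Fintype Y]

/-- Output law of the channel `W` for independent inputs drawn from `pa` and `pb`. -/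
def outQ (pa : A → ℝ) (pb : B → ℝ) (W : A → B → Y → ℝ) (y : Y) : ℝ :=
  ∑ a, ∑ b, pa a * pb b * W a b y

/-- Output law given the first input, the second one being drawn from `pb`. -/
def outA (pb : B → ℝ) (W : A → B → Y → ℝ) (a : A) (y : Y) : ℝ := ∑ b, pb b * W a b y

/-- Output law given the second input, the first one being drawn from `pa`. -/
def outB (pa : A → ℝ) (W : A → B → Y → ℝ) (b : B) (y : Y) : ℝ := ∑ a, pa a * W a b y

/-- Output law induced by uniformly chosen codewords of the codebooks `c1`, `c2`. -/
def outInd (W : A → B → Y → ℝ) {M1 M2 : ℕ} (c1 : Fin M1 → A) (c2 : Fin M2 → B) (y : Y) : ℝ :=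
  ((M1 : ℝ) * (M2 : ℝ))⁻¹ * ∑ l1, ∑ l2, W (c1 l1) (c2 l2) y

/-- `1` plus the three normalised likelihood ratios: conditionally on one transmitted pair
`(a, b)` of codewords, this dominates the mean of the induced-to-ideal ratio at `y`. -/
def ratioT (pa : A → ℝ) (pb : B → ℝ) (W : A → B → Y → ℝ) (M1 M2 : ℕ) (a : A) (b : B) (y : Y) : ℝ :=
  1 + (M1 : ℝ)⁻¹ * (outA pb W a y / outQ pa pb W y)
    + (M2 : ℝ)⁻¹ * (outB pa W b y / outQ pa pb W y)
    + ((M1 : ℝ)⁻¹ * (M2 : ℝ)⁻¹) * (W a b y / outQ pa pb W y)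

variable {pa : A → ℝ} {pb : B → ℝ} {W : A → B → Y → ℝ}

theorem outQ_nonneg (hpa : IsPmf pa) (hpb : IsPmf pb) (hW : ∀ a b y, 0 ≤ W a b y) (y : Y) :
    0 ≤ outQ pa pb W y :=
  Finset.sum_nonneg fun a _ => Finset.sum_nonneg fun b _ =>
    mul_nonneg (mul_nonneg (hpa.1 a) (hpb.1 b)) (hW a b y)

theorem outA_nonneg (hpb : IsPmf pb) (hW : ∀ a b y, 0 ≤ W a b y) (a : A) (y : Y) :
    0 ≤ outA pb W a y :=
  Finset.sum_nonneg fun b _ => mul_nonneg (hpb.1 b) (hW a b y)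

theorem outB_nonneg (hpa : IsPmf pa) (hW : ∀ a b y, 0 ≤ W a b y) (b : B) (y : Y) :
    0 ≤ outB pa W b y :=
  Finset.sum_nonneg fun a _ => mul_nonneg (hpa.1 a) (hW a b y)

theorem one_le_ratioT (hpa : IsPmf pa) (hpb : IsPmf pb) (hW : ∀ a b y, 0 ≤ W a b y)
    (M1 M2 : ℕ) (a : A) (b : B) (y : Y) : 1 ≤ ratioT pa pb W M1 M2 a b y := by
  have h0 := outQ_nonneg hpa hpb hW y
  have h1 := outA_nonneg hpb hW a y
  have h2 := outB_nonneg hpa hW b y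
  have h3 := hW a b y
  have e1 : 0 ≤ (M1 : ℝ)⁻¹ * (outA pb W a y / outQ pa pb W y) := by positivity
  have e2 : 0 ≤ (M2 : ℝ)⁻¹ * (outB pa W b y / outQ pa pb W y) := by positivity
  have e3 : 0 ≤ ((M1 : ℝ)⁻¹ * (M2 : ℝ)⁻¹) * (W a b y / outQ pa pb W y) := by positivity
  unfold ratioT
  linarith

/-- Second-moment bound: the codebook mean of the induced law weighted by `h` at the codeword
pair `(l1, l2)`, sorted according to which of the two indices coincide. -/
theorem expect_weighted_induced_le (hpa : IsPmf pa) (hpb : IsPmf pb)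
    (hW : ∀ a b y, 0 ≤ W a b y) {M1 M2 : ℕ} (hM1 : 0 < M1) (hM2 : 0 < M2)
    (l1 : Fin M1) (l2 : Fin M2) (y : Y) (hQ : 0 < outQ pa pb W y)
    (h : A → B → ℝ) (hh : ∀ a b, 0 ≤ h a b) :
    ∑ c1 : Fin M1 → A, ∑ c2 : Fin M2 → B, (∏ i, pa (c1 i)) * (∏ i, pb (c2 i)) *
        (h (c1 l1) (c2 l2) * outInd W c1 c2 y)
      ≤ ∑ a, ∑ b, pa a * pb b * (h a b * (outQ pa pb W y * ratioT pa pb W M1 M2 a b y)) := by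
  have hm1 : (0 : ℝ) < M1 := by exact_mod_cast hM1
  have hm2 : (0 : ℝ) < M2 := by exact_mod_cast hM2
  -- Both codebook averages are taken one after the other, over `c2` first.
  let G : A → A → ℝ := fun a a' =>
    ∑ b, pb b * (h a b * W a' b y + M2 * ∑ b', pb b' * (h a b * W a' b' y))
  have hG : ∀ a a', 0 ≤ G a a' := fun a a' =>
    Finset.sum_nonneg fun b _ => mul_nonneg (hpb.1 b) <|
      add_nonneg (mul_nonneg (hh _ _) (hW _ _ _)) <| mul_nonneg hm2.le <|
        Finset.sum_nonneg fun b' _ => mul_nonneg (hpb.1 b') (mul_nonneg (hh _ _) (hW _ _ _))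
  have step : ∀ c1 : Fin M1 → A,
      ∑ c2 : Fin M2 → B, (∏ i, pb (c2 i)) *
        (∑ j1, ∑ j2, h (c1 l1) (c2 l2) * W (c1 j1) (c2 j2) y) ≤ ∑ j1, G (c1 l1) (c1 j1) := by
    intro c1
    simp_rw [Finset.mul_sum (s := (Finset.univ : Finset (Fin M1)))]
    rw [Finset.sum_comm]
    refine Finset.sum_le_sum fun j1 _ => ?_
    exact sum_prod_pairs_le pb hpb l2 (fun b b' => h (c1 l1) b * W (c1 j1) b' y)
      (fun b b' => mul_nonneg (hh _ _) (hW _ _ _))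
  have eqL : ∑ c1 : Fin M1 → A, ∑ c2 : Fin M2 → B, (∏ i, pa (c1 i)) * (∏ i, pb (c2 i)) *
        (h (c1 l1) (c2 l2) * outInd W c1 c2 y)
      = ((M1 : ℝ) * M2)⁻¹ * ∑ c1 : Fin M1 → A, (∏ i, pa (c1 i)) *
        ∑ c2 : Fin M2 → B, (∏ i, pb (c2 i)) *
        (∑ j1, ∑ j2, h (c1 l1) (c2 l2) * W (c1 j1) (c2 j2) y) := by
    rw [Finset.mul_sum]
    refine Finset.sum_congr rfl fun c1 _ => ?_
    rw [Finset.mul_sum, Finset.mul_sum]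
    refine Finset.sum_congr rfl fun c2 _ => ?_
    simp_rw [← Finset.mul_sum]
    unfold outInd
    ring
  rw [eqL]
  calc _ ≤ ((M1 : ℝ) * M2)⁻¹ * ∑ c1 : Fin M1 → A, (∏ i, pa (c1 i)) * ∑ j1, G (c1 l1) (c1 j1) := by
        refine mul_le_mul_of_nonneg_left (Finset.sum_le_sum fun c1 _ => ?_) (by positivity)
        exact mul_le_mul_of_nonneg_left (step c1) (Finset.prod_nonneg fun i _ => hpa.1 _)
    _ ≤ ((M1 : ℝ) * M2)⁻¹ * ∑ a, pa a * (G a a + M1 * ∑ a', pa a' * G a a') :=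
        mul_le_mul_of_nonneg_left (sum_prod_pairs_le pa hpa l1 G hG) (by positivity)
    _ = _ := by
        rw [Finset.mul_sum]
        refine Finset.sum_congr rfl fun a _ => ?_
        have e1 : ∀ a', G a a' = ∑ b, pb b * h a b * (W a' b y + M2 * outA pb W a' y) := by
          intro a'
          refine Finset.sum_congr rfl fun b _ => ?_
          have : ∑ b', pb b' * (h a b * W a' b' y) = h a b * outA pb W a' y := by
            rw [outA, Finset.mul_sum]
            exact Finset.sum_congr rfl fun b' _ => by ring
          rw [this]
          ring
        have e2 : ∑ a', pa a' * G a a'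
            = ∑ b, pb b * h a b * (outB pa W b y + M2 * outQ pa pb W y) := by
          simp_rw [e1, Finset.mul_sum]
          rw [Finset.sum_comm]
          refine Finset.sum_congr rfl fun b _ => ?_
          have : outQ pa pb W y = ∑ a', pa a' * outA pb W a' y := by
            simp_rw [outQ, outA, Finset.mul_sum, mul_assoc]
          rw [this, outB, Finset.mul_sum, ← Finset.sum_add_distrib, Finset.mul_sum]
          exact Finset.sum_congr rfl fun a' _ => by ring
        rw [e2, e1, Finset.mul_sum, ← Finset.sum_add_distrib, Finset.mul_sum, Finset.mul_sum]
        refine Finset.sum_congr rfl fun b _ => ?_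
        unfold ratioT
        field_simp
        ring

/-- Jensen's inequality for the logarithm, in the form of its tangent line at `ratioT`. -/
theorem expect_log_le (hpa : IsPmf pa) (hpb : IsPmf pb)
    (hW : ∀ a b y, 0 ≤ W a b y) {M1 M2 : ℕ} (hM1 : 0 < M1) (hM2 : 0 < M2)
    (l1 : Fin M1) (l2 : Fin M2) (y : Y) :
    ∑ c1 : Fin M1 → A, ∑ c2 : Fin M2 → B, (∏ i, pa (c1 i)) * (∏ i, pb (c2 i)) *
        (W (c1 l1) (c2 l2) y * Real.log (outInd W c1 c2 y / outQ pa pb W y))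
      ≤ ∑ a, ∑ b, pa a * pb b * (W a b y * Real.log (ratioT pa pb W M1 M2 a b y)) := by
  have hm1 : (0 : ℝ) < M1 := by exact_mod_cast hM1
  have hm2 : (0 : ℝ) < M2 := by exact_mod_cast hM2
  have marg : ∀ f : A → B → ℝ,
      ∑ c1 : Fin M1 → A, ∑ c2 : Fin M2 → B, (∏ i, pa (c1 i)) * (∏ i, pb (c2 i)) *
        f (c1 l1) (c2 l2) = ∑ a, ∑ b, pa a * pb b * f a b := by
    intro f
    simp_rw [mul_assoc, ← Finset.mul_sum]
    simp_rw [fun c1 : Fin M1 → A =>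
      sum_prod_marginal (fun _ : Fin M2 => pb) (fun _ => hpb.2) l2 (f (c1 l1))]
    exact sum_prod_marginal (fun _ : Fin M1 => pa) (fun _ => hpa.2) l1
      (fun a => ∑ b, pb b * f a b)
  rcases (outQ_nonneg hpa hpb hW y).eq_or_lt with hQ | hQ
  · -- `outQ = 0`: division by zero makes both logarithms vanish.
    simp [ratioT, ← hQ]
  set t := fun a b => ratioT pa pb W M1 M2 a b y with ht
  have ht1 : ∀ a b, 1 ≤ t a b := fun a b => one_le_ratioT hpa hpb hW M1 M2 a b y
  have pt : ∀ (c1 : Fin M1 → A) (c2 : Fin M2 → B),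
      W (c1 l1) (c2 l2) y * Real.log (outInd W c1 c2 y / outQ pa pb W y)
        ≤ (W (c1 l1) (c2 l2) y * (Real.log (t (c1 l1) (c2 l2)) - 1)) +
          (W (c1 l1) (c2 l2) y / (outQ pa pb W y * t (c1 l1) (c2 l2))) * outInd W c1 c2 y := by
    intro c1 c2
    have htp : 0 < t (c1 l1) (c2 l2) := lt_of_lt_of_le one_pos (ht1 _ _)
    rcases (hW (c1 l1) (c2 l2) y).eq_or_lt with h0 | h0
    · simp [← h0]
    have hX : 0 < outInd W c1 c2 y := by
      refine mul_pos (by positivity) ?_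
      refine Finset.sum_pos' (fun j _ => Finset.sum_nonneg fun k _ => hW _ _ _)
        ⟨l1, Finset.mem_univ _, ?_⟩
      exact Finset.sum_pos' (fun k _ => hW _ _ _) ⟨l2, Finset.mem_univ _, h0⟩
    have hl := Real.log_le_sub_one_of_pos
      (x := outInd W c1 c2 y / outQ pa pb W y / t (c1 l1) (c2 l2)) (by positivity)
    rw [Real.log_div (by positivity) htp.ne'] at hl
    have := mul_le_mul_of_nonneg_left hl h0.le
    have e : W (c1 l1) (c2 l2) y / (outQ pa pb W y * t (c1 l1) (c2 l2)) * outInd W c1 c2 y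
        = W (c1 l1) (c2 l2) y * (outInd W c1 c2 y / outQ pa pb W y / t (c1 l1) (c2 l2)) := by
      field_simp
    rw [e]
    linarith
  have hE := expect_weighted_induced_le hpa hpb hW hM1 hM2 l1 l2 y hQ
    (fun a b => W a b y / (outQ pa pb W y * t a b))
    (fun a b => div_nonneg (hW _ _ _) (mul_nonneg hQ.le (zero_le_one.trans (ht1 a b))))
  have e3 : ∀ a b, W a b y / (outQ pa pb W y * t a b) *
      (outQ pa pb W y * ratioT pa pb W M1 M2 a b y) = W a b y := by
    intro a b
    exact div_mul_cancel₀ _ (mul_pos hQ (lt_of_lt_of_le one_pos (ht1 a b))).ne'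
  simp_rw [e3] at hE
  calc _ ≤ ∑ c1 : Fin M1 → A, ∑ c2 : Fin M2 → B, (∏ i, pa (c1 i)) * (∏ i, pb (c2 i)) *
        ((W (c1 l1) (c2 l2) y * (Real.log (t (c1 l1) (c2 l2)) - 1)) +
          (W (c1 l1) (c2 l2) y / (outQ pa pb W y * t (c1 l1) (c2 l2))) *
            outInd W c1 c2 y) := by
        refine Finset.sum_le_sum fun c1 _ => Finset.sum_le_sum fun c2 _ => ?_
        exact mul_le_mul_of_nonneg_left (pt c1 c2)
          (mul_nonneg (Finset.prod_nonneg fun i _ => hpa.1 _)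
            (Finset.prod_nonneg fun i _ => hpb.1 _))
    _ ≤ ∑ a, ∑ b, pa a * pb b * (W a b y * (Real.log (t a b) - 1))
        + ∑ a, ∑ b, pa a * pb b * W a b y := by
        simp_rw [mul_add, Finset.sum_add_distrib]
        exact add_le_add (marg fun a b => W a b y * (Real.log (t a b) - 1)).le hE
    _ = _ := by
        simp_rw [← Finset.sum_add_distrib]
        exact Finset.sum_congr rfl fun a _ => Finset.sum_congr rfl fun b _ => by
          simp only [ht]
          ring

theorem log_one_add_le_rpow {α x : ℝ} (hα : 0 < α) (hα1 : α ≤ 1) (hx : 0 ≤ x) :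
    Real.log (1 + x) ≤ α⁻¹ * x ^ α := by
  have h1 : (1 + x) ^ α ≤ 1 + x ^ α := by
    have := Real.rpow_add_le_add_rpow zero_le_one hx hα.le hα1
    simpa using this
  have hp : 0 < (1 + x) ^ α := Real.rpow_pos_of_pos (by linarith) _
  have h2 := Real.log_le_sub_one_of_pos hp
  rw [Real.log_rpow (by linarith)] at h2
  rw [inv_mul_eq_div, le_div_iff₀ hα]
  linarith

theorem log_one_add3_le {α x y z : ℝ} (hα : 0 < α) (hα1 : α ≤ 1) (hx : 0 ≤ x) (hy : 0 ≤ y)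
    (hz : 0 ≤ z) : Real.log (1 + x + y + z) ≤ α⁻¹ * (x ^ α + y ^ α + z ^ α) := by
  have h : Real.log (1 + x + y + z) ≤ Real.log ((1 + x) * (1 + y) * (1 + z)) := by
    refine Real.log_le_log (by linarith) ?_
    have := mul_nonneg hx hy
    have := mul_nonneg hx hz
    have := mul_nonneg hy hz
    have := mul_nonneg (mul_nonneg hx hy) hz
    nlinarith
  rw [Real.log_mul (by positivity) (by positivity), Real.log_mul (by positivity) (by positivity)]
    at h
  have := log_one_add_le_rpow hα hα1 hx
  have := log_one_add_le_rpow hα hα1 hy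
  have := log_one_add_le_rpow hα hα1 hz
  linarith

/-- One-shot resolvability: the expected divergence is controlled by three moments of order
`α` of the likelihood ratios. -/
theorem expect_KL_le (hpa : IsPmf pa) (hpb : IsPmf pb)
    (hW : ∀ a b y, 0 ≤ W a b y) {M1 M2 : ℕ} (hM1 : 0 < M1) (hM2 : 0 < M2)
    {α : ℝ} (hα : 0 < α) (hα1 : α ≤ 1) :
    ∑ c1 : Fin M1 → A, ∑ c2 : Fin M2 → B, (∏ i, pa (c1 i)) * (∏ i, pb (c2 i)) *
        KL (outInd W c1 c2) (outQ pa pb W)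
      ≤ (α * Real.log 2)⁻¹ *
        (((M1 : ℝ)⁻¹) ^ α * (∑ a, ∑ b, ∑ y, pa a * pb b * W a b y *
            (outA pb W a y / outQ pa pb W y) ^ α)
        + ((M2 : ℝ)⁻¹) ^ α * (∑ a, ∑ b, ∑ y, pa a * pb b * W a b y *
            (outB pa W b y / outQ pa pb W y) ^ α)
        + ((M1 : ℝ)⁻¹ * (M2 : ℝ)⁻¹) ^ α * (∑ a, ∑ b, ∑ y, pa a * pb b * W a b y *
            (W a b y / outQ pa pb W y) ^ α)) := by
  have hm1 : (0 : ℝ) < M1 := by exact_mod_cast hM1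
  have hm2 : (0 : ℝ) < M2 := by exact_mod_cast hM2
  have hlog2 : 0 < Real.log 2 := Real.log_pos (by norm_num)
  set E := fun (f : (Fin M1 → A) → (Fin M2 → B) → ℝ) =>
    ∑ c1 : Fin M1 → A, ∑ c2 : Fin M2 → B, (∏ i, pa (c1 i)) * (∏ i, pb (c2 i)) * f c1 c2 with hE
  have eq1 : E (fun c1 c2 => KL (outInd W c1 c2) (outQ pa pb W))
      = (Real.log 2)⁻¹ * ∑ y, ((M1 : ℝ) * M2)⁻¹ * ∑ l1, ∑ l2, E (fun c1 c2 =>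
        W (c1 l1) (c2 l2) y * Real.log (outInd W c1 c2 y / outQ pa pb W y)) := by
    have hKL : ∀ (c1 : Fin M1 → A) (c2 : Fin M2 → B), KL (outInd W c1 c2) (outQ pa pb W)
        = ∑ y, ∑ l1, ∑ l2, (Real.log 2)⁻¹ * ((M1 : ℝ) * M2)⁻¹ *
          (W (c1 l1) (c2 l2) y * Real.log (outInd W c1 c2 y / outQ pa pb W y)) := by
      intro c1 c2
      refine Finset.sum_congr rfl fun y _ => ?_
      simp_rw [← Finset.mul_sum, ← Finset.sum_mul]
      rw [Real.logb]
      nth_rewrite 1 [outInd]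
      field_simp
    simp only [hE, hKL, Finset.mul_sum]
    simp_rw [Finset.sum_comm (s := (Finset.univ : Finset (Fin M2 → B)))]
    simp_rw [Finset.sum_comm (s := (Finset.univ : Finset (Fin M1 → A)))]
    refine Finset.sum_congr rfl fun _ _ => Finset.sum_congr rfl fun _ _ =>
      Finset.sum_congr rfl fun _ _ => Finset.sum_congr rfl fun _ _ =>
      Finset.sum_congr rfl fun _ _ => by ring
  change E (fun c1 c2 => KL (outInd W c1 c2) (outQ pa pb W)) ≤ _
  rw [eq1, mul_inv α, mul_comm α⁻¹, mul_assoc]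
  refine mul_le_mul_of_nonneg_left ?_ (by positivity)
  calc _ ≤ ∑ y, ((M1 : ℝ) * M2)⁻¹ * ∑ l1 : Fin M1, ∑ l2 : Fin M2,
        ∑ a, ∑ b, pa a * pb b * (W a b y * Real.log (ratioT pa pb W M1 M2 a b y)) := by
        refine Finset.sum_le_sum fun y _ => mul_le_mul_of_nonneg_left ?_ (by positivity)
        exact Finset.sum_le_sum fun l1 _ => Finset.sum_le_sum fun l2 _ =>
          expect_log_le hpa hpb hW hM1 hM2 l1 l2 y
    _ = ∑ y, ∑ a, ∑ b, pa a * pb b * W a b y * Real.log (ratioT pa pb W M1 M2 a b y) := by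
        refine Finset.sum_congr rfl fun y _ => ?_
        simp only [Finset.sum_const, Finset.card_univ, Fintype.card_fin, nsmul_eq_mul]
        rw [← mul_assoc, ← mul_assoc, mul_assoc _ (M1 : ℝ), inv_mul_cancel₀ (by positivity),
          one_mul]
        simp_rw [mul_assoc]
    _ ≤ ∑ y, ∑ a, ∑ b, pa a * pb b * W a b y *
        (α⁻¹ * (((M1 : ℝ)⁻¹) ^ α * (outA pb W a y / outQ pa pb W y) ^ α
          + ((M2 : ℝ)⁻¹) ^ α * (outB pa W b y / outQ pa pb W y) ^ α
          + ((M1 : ℝ)⁻¹ * (M2 : ℝ)⁻¹) ^ α * (W a b y / outQ pa pb W y) ^ α)) := by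
        refine Finset.sum_le_sum fun y _ => Finset.sum_le_sum fun a _ =>
          Finset.sum_le_sum fun b _ => ?_
        have h0 := outQ_nonneg hpa hpb hW y
        have h1 := outA_nonneg hpb hW a y
        have h2 := outB_nonneg hpa hW b y
        have h3 := hW a b y
        refine mul_le_mul_of_nonneg_left ?_
          (mul_nonneg (mul_nonneg (hpa.1 a) (hpb.1 b)) h3)
        rw [← Real.mul_rpow (by positivity) (by positivity),
          ← Real.mul_rpow (by positivity) (by positivity),
          ← Real.mul_rpow (by positivity) (by positivity)]
        exact log_one_add3_le hα hα1 (by positivity) (by positivity) (by positivity)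
    _ = _ := by
        rw [Finset.sum_comm]
        simp_rw [Finset.sum_comm (s := (Finset.univ : Finset Y)) (t := (Finset.univ : Finset B))]
        simp_rw [Finset.mul_sum, ← Finset.sum_add_distrib, Finset.mul_sum]
        exact Finset.sum_congr rfl fun a _ => Finset.sum_congr rfl fun b _ =>
          Finset.sum_congr rfl fun y _ => by ring

/-- Gibbs' inequality. Absolute continuity is required because a term with `q y = 0` counts
as zero here. -/
theorem KL_nonneg {p q : Y → ℝ} (hp : IsPmf p) (hq : IsPmf q) (hac : ∀ y, q y = 0 → p y = 0) :
    0 ≤ KL p q := by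
  have hlog2 : 0 < Real.log 2 := Real.log_pos (by norm_num)
  have h : ∀ y, (Real.log 2)⁻¹ * (p y - q y) ≤ p y * Real.logb 2 (p y / q y) := by
    intro y
    rcases (hp.1 y).eq_or_lt with h0 | h0
    · rw [← h0]
      have := mul_nonneg (inv_nonneg.2 hlog2.le) (hq.1 y)
      simpa using this
    · have hqy : 0 < q y := lt_of_le_of_ne (hq.1 y) fun h => h0.ne' (hac y h.symm)
      have hl := Real.one_sub_inv_le_log_of_pos (div_pos h0 hqy)
      have := mul_le_mul_of_nonneg_left hl h0.le
      have e : p y * (1 - (p y / q y)⁻¹) = p y - q y := by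
        field_simp
      rw [e] at this
      rw [Real.logb, mul_div_assoc', inv_mul_eq_div]
      exact div_le_div_of_nonneg_right this hlog2.le
  calc (0 : ℝ) = ∑ y, (Real.log 2)⁻¹ * (p y - q y) := by
        rw [← Finset.mul_sum, Finset.sum_sub_distrib, hp.2, hq.2]
        simp
    _ ≤ _ := Finset.sum_le_sum fun y _ => h y

theorem expect_KL_nonneg (hpa : IsPmf pa) (hpb : IsPmf pb)
    (hW : ∀ a b, IsPmf (W a b)) {M1 M2 : ℕ} (hM1 : 0 < M1) (hM2 : 0 < M2) :
    0 ≤ ∑ c1 : Fin M1 → A, ∑ c2 : Fin M2 → B, (∏ i, pa (c1 i)) * (∏ i, pb (c2 i)) *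
        KL (outInd W c1 c2) (outQ pa pb W) := by
  have hm1 : (0 : ℝ) < M1 := by exact_mod_cast hM1
  have hm2 : (0 : ℝ) < M2 := by exact_mod_cast hM2
  refine Finset.sum_nonneg fun c1 _ => Finset.sum_nonneg fun c2 _ => ?_
  have hnn : 0 ≤ (∏ i, pa (c1 i)) * (∏ i, pb (c2 i)) :=
    mul_nonneg (Finset.prod_nonneg fun i _ => hpa.1 _) (Finset.prod_nonneg fun i _ => hpb.1 _)
  rcases hnn.eq_or_lt with h0 | h0
  · rw [← h0, zero_mul]
  refine mul_nonneg hnn (KL_nonneg ⟨fun y => ?_, ?_⟩ ⟨fun y => ?_, ?_⟩ fun y hy => ?_)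
  · exact mul_nonneg (by positivity) (Finset.sum_nonneg fun j _ => Finset.sum_nonneg fun k _ =>
      (hW _ _).1 y)
  · unfold outInd
    rw [← Finset.mul_sum, Finset.sum_comm]
    simp_rw [Finset.sum_comm (s := (Finset.univ : Finset Y)), (hW _ _).2]
    simp
    field_simp
  · exact outQ_nonneg hpa hpb (fun a b => (hW a b).1) y
  · unfold outQ
    rw [Finset.sum_comm]
    simp_rw [Finset.sum_comm (s := (Finset.univ : Finset Y)), ← Finset.mul_sum, (hW _ _).2]
    simp [← Finset.mul_sum, hpb.2, hpa.2]
  · -- A codebook of positive probability only uses codewords of positive probability.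
    have hne := mul_ne_zero_iff.1 h0.ne'
    have hz : ∀ a b, pa a * pb b * W a b y = 0 := by
      have h1 := (Finset.sum_eq_zero_iff_of_nonneg (fun a _ => Finset.sum_nonneg fun b _ =>
        mul_nonneg (mul_nonneg (hpa.1 a) (hpb.1 b)) ((hW a b).1 y))).1 hy
      intro a b
      exact (Finset.sum_eq_zero_iff_of_nonneg (fun b _ =>
        mul_nonneg (mul_nonneg (hpa.1 a) (hpb.1 b)) ((hW a b).1 y))).1
          (h1 a (Finset.mem_univ _)) b (Finset.mem_univ _)
    have : ∀ j k, W (c1 j) (c2 k) y = 0 := by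
      intro j k
      have ha := Finset.prod_ne_zero_iff.1 hne.1 j (Finset.mem_univ _)
      have hb := Finset.prod_ne_zero_iff.1 hne.2 k (Finset.mem_univ _)
      exact (mul_eq_zero.1 (hz (c1 j) (c2 k))).resolve_left (mul_ne_zero ha hb)
    simp [outInd, this]

end OneShot

/-! ### Single-letter exponents -/

theorem le_law_apply {Ω α : Type*} [Fintype Ω] [DecidableEq α] {p : Ω → ℝ} (hp : ∀ ω, 0 ≤ p ω)
    (X : Ω → α) (ω : Ω) : p ω ≤ law p X (X ω) := by
  have := Finset.single_le_sum (f := fun ω' => if X ω' = X ω then p ω' else 0)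
    (fun ω' _ => by
      show 0 ≤ if X ω' = X ω then p ω' else 0
      split_ifs
      · exact hp ω'
      · exact le_rfl) (Finset.mem_univ ω)
  simpa [law] using this

theorem H_eq_sum {Ω α : Type*} [Fintype Ω] [Fintype α] [DecidableEq α] (p : Ω → ℝ) (X : Ω → α) :
    H p X = -∑ ω, p ω * Real.logb 2 (law p X (X ω)) := by
  unfold H ent
  congr 1
  have : ∀ a, law p X a * Real.logb 2 (law p X a)
      = ∑ ω, if X ω = a then p ω * Real.logb 2 (law p X a) else 0 := by
    intro a
    conv_lhs => enter [1]; unfold law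
    rw [Finset.sum_mul]
    exact Finset.sum_congr rfl fun ω _ => by split_ifs <;> simp
  simp_rw [this]
  rw [Finset.sum_comm]
  simp

/-- Conditional mutual information as the mean of a log-likelihood ratio, once the four laws
defining it are factored. -/
theorem cMI_eq_sum_logb {Ω α β γ : Type*} [Fintype Ω] [Fintype α] [Fintype β] [Fintype γ]
    [DecidableEq α] [DecidableEq β] [DecidableEq γ] {p : Ω → ℝ} (hp : ∀ ω, 0 ≤ p ω) {X : Ω → α}
    {Y : Ω → β} {Z : Ω → γ} (σ x v w q : Ω → ℝ)
    (hXZ : ∀ ω, law p (fun ω => (X ω, Z ω)) (X ω, Z ω) = x ω * σ ω)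
    (hZ : ∀ ω, law p Z (Z ω) = σ ω)
    (hXYZ : ∀ ω, law p (fun ω => (X ω, (Y ω, Z ω))) (X ω, (Y ω, Z ω)) = x ω * (v ω * w ω))
    (hYZ : ∀ ω, law p (fun ω => (Y ω, Z ω)) (Y ω, Z ω) = v ω * q ω) :
    cMI p X Y Z = ∑ ω, p ω * Real.logb 2 (w ω / q ω) := by
  unfold cMI Hc
  simp only [H_eq_sum, hXZ, hZ, hXYZ, hYZ]
  have : ∀ A B C D : ℝ, (-A - -B) - (-C - -D) = B + C - A - D := by intros; ring
  rw [this, ← Finset.sum_add_distrib, ← Finset.sum_sub_distrib, ← Finset.sum_sub_distrib]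
  refine Finset.sum_congr rfl fun ω _ => ?_
  rcases (hp ω).eq_or_lt with h0 | h0
  · simp [← h0]
  have a1 : x ω * σ ω ≠ 0 := by
    rw [← hXZ]
    exact (h0.trans_le (le_law_apply hp (fun ω => (X ω, Z ω)) ω)).ne'
  have a2 : x ω * (v ω * w ω) ≠ 0 := by
    rw [← hXYZ]
    exact (h0.trans_le (le_law_apply hp (fun ω => (X ω, (Y ω, Z ω))) ω)).ne'
  have a3 : v ω * q ω ≠ 0 := by
    rw [← hYZ]
    exact (h0.trans_le (le_law_apply hp (fun ω => (Y ω, Z ω)) ω)).ne'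
  obtain ⟨hx, hσ⟩ := mul_ne_zero_iff.1 a1
  obtain ⟨-, hvw⟩ := mul_ne_zero_iff.1 a2
  obtain ⟨hv, hw⟩ := mul_ne_zero_iff.1 hvw
  obtain ⟨-, hq⟩ := mul_ne_zero_iff.1 a3
  rw [Real.logb_mul hx hσ, Real.logb_mul hx hvw, Real.logb_mul hv hw, Real.logb_mul hv hq,
    Real.logb_div hw hq]
  ring

/-- If the mean of `log r` is below `R`, then the moments `E[r ^ α]` are eventually below
`2 ^ (α R)` as `α` decreases to `0`: compare derivatives at `0`. -/
theorem eventually_moment_lt_one {Ω : Type*} [Fintype Ω] {p r : Ω → ℝ} (hp : IsPmf p)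
    (hr : ∀ ω, 0 < p ω → 0 < r ω) {R : ℝ} (h : ∑ ω, p ω * Real.logb 2 (r ω) < R) :
    ∀ᶠ α in nhdsWithin (0 : ℝ) (Set.Ioi 0),
      (2 : ℝ) ^ (-(α * R)) * ∑ ω, p ω * r ω ^ α < 1 := by
  have hlog2 : 0 < Real.log 2 := Real.log_pos (by norm_num)
  set g : ℝ → ℝ := fun α => ∑ ω, p ω * Real.exp (α * (Real.log (r ω) - R * Real.log 2)) with hg
  have hd : HasDerivAt g (∑ ω, p ω * (Real.log (r ω) - R * Real.log 2)) 0 := by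
    refine HasDerivAt.fun_sum fun ω _ => HasDerivAt.const_mul _ ?_
    have := ((hasDerivAt_id (0 : ℝ)).mul_const (Real.log (r ω) - R * Real.log 2)).exp
    simpa using this
  have hneg : ∑ ω, p ω * (Real.log (r ω) - R * Real.log 2) < 0 := by
    simp_rw [mul_sub, Finset.sum_sub_distrib, ← Finset.sum_mul, hp.2]
    have e : ∑ ω, p ω * Real.logb 2 (r ω) = (∑ ω, p ω * Real.log (r ω)) / Real.log 2 := by
      rw [Finset.sum_div]
      exact Finset.sum_congr rfl fun ω _ => by rw [Real.logb, mul_div_assoc]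
    rw [e, div_lt_iff₀ hlog2] at h
    linarith
  have hs := (hasDerivAt_iff_tendsto_slope.1 hd).eventually (gt_mem_nhds hneg)
  have hs' : ∀ᶠ α in nhdsWithin (0 : ℝ) (Set.Ioi 0), slope g 0 α < 0 :=
    hs.filter_mono (nhdsWithin_mono _ fun x hx => ne_of_gt hx)
  filter_upwards [hs', self_mem_nhdsWithin] with α h1 h2
  have hα : (0 : ℝ) < α := h2
  have hg0 : g 0 = 1 := by simp [hg, hp.2]
  rw [slope_def_field, sub_zero, div_lt_iff₀ hα, hg0] at h1
  have : (2 : ℝ) ^ (-(α * R)) * ∑ ω, p ω * r ω ^ α = g α := by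
    rw [Finset.mul_sum]
    refine Finset.sum_congr rfl fun ω _ => ?_
    rcases (hp.1 ω).eq_or_lt with h0 | h0
    · simp [← h0]
    rw [Real.rpow_def_of_pos (hr ω h0), Real.rpow_def_of_pos (by norm_num), mul_left_comm,
      ← Real.exp_add]
    congr 2
    ring
  rw [this]
  linarith

/-- The single-letter channel `P_{ZS | U U1 U2}` for a fixed `u`. -/
def slW (PS : AS → ℝ) (PZ : U → U1 → U2 → AS → AZ → ℝ) (u : U) (a : U1) (b : U2)
    (y : AZ × AS) : ℝ := PZ u a b y.2 y.1 * PS y.2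

section SingleLetter

variable {PU : U → ℝ} {PU1 : U → U1 → ℝ} {PU2 : U → U2 → ℝ} {PS : AS → ℝ}
  {PZ : U → U1 → U2 → AS → AZ → ℝ}

theorem slJointZ_nonneg (hPU : IsPmf PU) (hPU1 : IsKernel PU1) (hPU2 : IsKernel PU2)
    (hPS : IsPmf PS) (hPZ : ∀ u u1 u2 s, IsPmf (PZ u u1 u2 s)) (ω : O5Z U U1 U2 AS AZ) :
    0 ≤ slJointZ PU PU1 PU2 PS PZ ω :=
  mul_nonneg (mul_nonneg (mul_nonneg (mul_nonneg (hPS.1 _) (hPU.1 _)) ((hPU1 _).1 _))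
    ((hPU2 _).1 _)) ((hPZ _ _ _ _).1 _)

theorem slJointZ_isPmf (hPU : IsPmf PU) (hPU1 : IsKernel PU1) (hPU2 : IsKernel PU2)
    (hPS : IsPmf PS) (hPZ : ∀ u u1 u2 s, IsPmf (PZ u u1 u2 s)) :
    IsPmf (slJointZ PU PU1 PU2 PS PZ) := by
  refine ⟨slJointZ_nonneg hPU hPU1 hPU2 hPS hPZ, ?_⟩
  simp only [slJointZ, Fintype.sum_prod_type, O5Z.u, O5Z.u1, O5Z.u2, O5Z.s, O5Z.z]
  simp_rw [← Finset.mul_sum, (hPZ _ _ _ _).2, mul_one, mul_assoc, ← Finset.sum_mul,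
    ← Finset.mul_sum, (hPU2 _).2, mul_one, (hPU1 _).2, hPS.2, mul_one, hPU.2]
  simp

theorem law_su (hPU1 : IsKernel PU1) (hPU2 : IsKernel PU2)
    (hPZ : ∀ u u1 u2 s, IsPmf (PZ u u1 u2 s)) (ω : O5Z U U1 U2 AS AZ) :
    law (slJointZ PU PU1 PU2 PS PZ) (fun ω => (ω.s, ω.u)) (ω.s, ω.u) = PS ω.s * PU ω.u := by
  obtain ⟨u, a, b, s, z⟩ := ω
  simp only [law, slJointZ, Fintype.sum_prod_type, O5Z.u, O5Z.u1, O5Z.u2, O5Z.s, O5Z.z,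
    Prod.mk.injEq, ite_and, Finset.sum_ite_irrel, Finset.sum_const_zero, Finset.sum_ite_eq',
    Finset.mem_univ, if_true, ← Finset.mul_sum, (hPZ _ _ _ _).2, (hPU2 _).2, (hPU1 _).2, mul_one]

theorem law_zsu (ω : O5Z U U1 U2 AS AZ) :
    law (slJointZ PU PU1 PU2 PS PZ) (fun ω => (ω.z, (ω.s, ω.u))) (ω.z, (ω.s, ω.u))
      = PU ω.u * outQ (PU1 ω.u) (PU2 ω.u) (slW PS PZ ω.u) (ω.z, ω.s) := by
  obtain ⟨u, a, b, s, z⟩ := ω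
  simp only [law, slJointZ, Fintype.sum_prod_type, O5Z.u, O5Z.u1, O5Z.u2, O5Z.s, O5Z.z,
    Prod.mk.injEq, ite_and, Finset.sum_ite_irrel, Finset.sum_const_zero, Finset.sum_ite_eq',
    Finset.mem_univ, if_true, outQ, slW, Finset.mul_sum]
  exact Finset.sum_congr rfl fun _ _ => Finset.sum_congr rfl fun _ _ => by ring

theorem cMI_u1 (hPU : IsPmf PU) (hPU1 : IsKernel PU1) (hPU2 : IsKernel PU2)
    (hPS : IsPmf PS) (hPZ : ∀ u u1 u2 s, IsPmf (PZ u u1 u2 s)) :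
    cMI (slJointZ PU PU1 PU2 PS PZ) (fun ω => ω.u1) (fun ω => ω.z) (fun ω => (ω.s, ω.u))
      = ∑ ω : O5Z U U1 U2 AS AZ, slJointZ PU PU1 PU2 PS PZ ω *
        Real.logb 2 (outA (PU2 ω.u) (slW PS PZ ω.u) ω.u1 (ω.z, ω.s) /
          outQ (PU1 ω.u) (PU2 ω.u) (slW PS PZ ω.u) (ω.z, ω.s)) := by
  refine cMI_eq_sum_logb (slJointZ_nonneg hPU hPU1 hPU2 hPS hPZ)
    (fun ω => PS ω.s * PU ω.u) (fun ω => PU1 ω.u ω.u1) (fun ω => PU ω.u) _ _ ?_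
    (law_su hPU1 hPU2 hPZ) ?_ law_zsu
  · rintro ⟨u, a, b, s, z⟩
    simp only [law, slJointZ, Fintype.sum_prod_type, O5Z.u, O5Z.u1, O5Z.u2, O5Z.s, O5Z.z,
      Prod.mk.injEq, ite_and, Finset.sum_ite_irrel, Finset.sum_const_zero, Finset.sum_ite_eq',
      Finset.mem_univ, if_true, ← Finset.mul_sum, (hPZ _ _ _ _).2, (hPU2 _).2, mul_one]
    ring
  · rintro ⟨u, a, b, s, z⟩
    simp only [law, slJointZ, Fintype.sum_prod_type, O5Z.u, O5Z.u1, O5Z.u2, O5Z.s, O5Z.z,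
      Prod.mk.injEq, ite_and, Finset.sum_ite_irrel, Finset.sum_const_zero, Finset.sum_ite_eq',
      Finset.mem_univ, if_true, outA, slW, Finset.mul_sum]
    exact Finset.sum_congr rfl fun _ _ => by ring

theorem cMI_u2 (hPU : IsPmf PU) (hPU1 : IsKernel PU1) (hPU2 : IsKernel PU2)
    (hPS : IsPmf PS) (hPZ : ∀ u u1 u2 s, IsPmf (PZ u u1 u2 s)) :
    cMI (slJointZ PU PU1 PU2 PS PZ) (fun ω => ω.u2) (fun ω => ω.z) (fun ω => (ω.s, ω.u))
      = ∑ ω : O5Z U U1 U2 AS AZ, slJointZ PU PU1 PU2 PS PZ ω *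
        Real.logb 2 (outB (PU1 ω.u) (slW PS PZ ω.u) ω.u2 (ω.z, ω.s) /
          outQ (PU1 ω.u) (PU2 ω.u) (slW PS PZ ω.u) (ω.z, ω.s)) := by
  refine cMI_eq_sum_logb (slJointZ_nonneg hPU hPU1 hPU2 hPS hPZ)
    (fun ω => PS ω.s * PU ω.u) (fun ω => PU2 ω.u ω.u2) (fun ω => PU ω.u) _ _ ?_
    (law_su hPU1 hPU2 hPZ) ?_ law_zsu
  · rintro ⟨u, a, b, s, z⟩
    simp only [law, slJointZ, Fintype.sum_prod_type, O5Z.u, O5Z.u1, O5Z.u2, O5Z.s, O5Z.z,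
      Prod.mk.injEq, ite_and, Finset.sum_ite_irrel, Finset.sum_const_zero, Finset.sum_ite_eq',
      Finset.mem_univ, if_true, ← Finset.mul_sum, ← Finset.sum_mul, (hPZ _ _ _ _).2,
      (hPU1 _).2, mul_one]
    ring
  · rintro ⟨u, a, b, s, z⟩
    simp only [law, slJointZ, Fintype.sum_prod_type, O5Z.u, O5Z.u1, O5Z.u2, O5Z.s, O5Z.z,
      Prod.mk.injEq, ite_and, Finset.sum_ite_irrel, Finset.sum_const_zero, Finset.sum_ite_eq',
      Finset.mem_univ, if_true, outB, slW, Finset.mul_sum]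
    exact Finset.sum_congr rfl fun _ _ => by ring

theorem cMI_u12 (hPU : IsPmf PU) (hPU1 : IsKernel PU1) (hPU2 : IsKernel PU2)
    (hPS : IsPmf PS) (hPZ : ∀ u u1 u2 s, IsPmf (PZ u u1 u2 s)) :
    cMI (slJointZ PU PU1 PU2 PS PZ) (fun ω => (ω.u1, ω.u2)) (fun ω => ω.z)
        (fun ω => (ω.s, ω.u))
      = ∑ ω : O5Z U U1 U2 AS AZ, slJointZ PU PU1 PU2 PS PZ ω *
        Real.logb 2 (slW PS PZ ω.u ω.u1 ω.u2 (ω.z, ω.s) /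
          outQ (PU1 ω.u) (PU2 ω.u) (slW PS PZ ω.u) (ω.z, ω.s)) := by
  refine cMI_eq_sum_logb (slJointZ_nonneg hPU hPU1 hPU2 hPS hPZ)
    (fun ω => PS ω.s * PU ω.u) (fun ω => PU1 ω.u ω.u1 * PU2 ω.u ω.u2) (fun ω => PU ω.u) _ _ ?_
    (law_su hPU1 hPU2 hPZ) ?_ law_zsu
  · rintro ⟨u, a, b, s, z⟩
    simp only [law, slJointZ, Fintype.sum_prod_type, O5Z.u, O5Z.u1, O5Z.u2, O5Z.s, O5Z.z,
      Prod.mk.injEq, ite_and, Finset.sum_ite_irrel, Finset.sum_const_zero, Finset.sum_ite_eq',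
      Finset.mem_univ, if_true, ← Finset.mul_sum, (hPZ _ _ _ _).2, mul_one]
    ring
  · rintro ⟨u, a, b, s, z⟩
    simp only [law, slJointZ, Fintype.sum_prod_type, O5Z.u, O5Z.u1, O5Z.u2, O5Z.s, O5Z.z,
      Prod.mk.injEq, ite_and, Finset.sum_ite_irrel, Finset.sum_const_zero, Finset.sum_ite_eq',
      Finset.mem_univ, if_true, slW]
    ring

/-- On the support of the joint law, the likelihood ratios are positive. -/
theorem ratios_pos (hPU1 : IsKernel PU1) (hPU2 : IsKernel PU2)
    (hPS : IsPmf PS) (hPZ : ∀ u u1 u2 s, IsPmf (PZ u u1 u2 s)) (ω : O5Z U U1 U2 AS AZ)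
    (h : 0 < slJointZ PU PU1 PU2 PS PZ ω) :
    0 < outA (PU2 ω.u) (slW PS PZ ω.u) ω.u1 (ω.z, ω.s) /
          outQ (PU1 ω.u) (PU2 ω.u) (slW PS PZ ω.u) (ω.z, ω.s) ∧
    0 < outB (PU1 ω.u) (slW PS PZ ω.u) ω.u2 (ω.z, ω.s) /
          outQ (PU1 ω.u) (PU2 ω.u) (slW PS PZ ω.u) (ω.z, ω.s) ∧
    0 < slW PS PZ ω.u ω.u1 ω.u2 (ω.z, ω.s) /
          outQ (PU1 ω.u) (PU2 ω.u) (slW PS PZ ω.u) (ω.z, ω.s) := by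
  have hW : ∀ a b y, 0 ≤ slW PS PZ ω.u a b y := fun a b y =>
    mul_nonneg ((hPZ _ _ _ _).1 _) (hPS.1 _)
  obtain ⟨h', hz⟩ := mul_ne_zero_iff.1 h.ne'
  obtain ⟨h', hb⟩ := mul_ne_zero_iff.1 h'
  obtain ⟨h', ha⟩ := mul_ne_zero_iff.1 h'
  obtain ⟨hs, -⟩ := mul_ne_zero_iff.1 h'
  have pa : 0 < PU1 ω.u ω.u1 := lt_of_le_of_ne ((hPU1 _).1 _) (Ne.symm ha)
  have pb : 0 < PU2 ω.u ω.u2 := lt_of_le_of_ne ((hPU2 _).1 _) (Ne.symm hb)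
  have pw : 0 < slW PS PZ ω.u ω.u1 ω.u2 (ω.z, ω.s) :=
    lt_of_le_of_ne (hW _ _ _) (Ne.symm (mul_ne_zero hz hs))
  have pA : 0 < outA (PU2 ω.u) (slW PS PZ ω.u) ω.u1 (ω.z, ω.s) :=
    Finset.sum_pos' (fun b _ => mul_nonneg ((hPU2 _).1 b) (hW _ _ _))
      ⟨ω.u2, Finset.mem_univ _, mul_pos pb pw⟩
  have pB : 0 < outB (PU1 ω.u) (slW PS PZ ω.u) ω.u2 (ω.z, ω.s) :=
    Finset.sum_pos' (fun a _ => mul_nonneg ((hPU1 _).1 a) (hW _ _ _))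
      ⟨ω.u1, Finset.mem_univ _, mul_pos pa pw⟩
  have pQ : 0 < outQ (PU1 ω.u) (PU2 ω.u) (slW PS PZ ω.u) (ω.z, ω.s) :=
    Finset.sum_pos' (fun a _ => Finset.sum_nonneg fun b _ =>
        mul_nonneg (mul_nonneg ((hPU1 _).1 a) ((hPU2 _).1 b)) (hW _ _ _))
      ⟨ω.u1, Finset.mem_univ _, Finset.sum_pos' (fun b _ =>
        mul_nonneg (mul_nonneg ((hPU1 _).1 _) ((hPU2 _).1 b)) (hW _ _ _))
        ⟨ω.u2, Finset.mem_univ _, mul_pos (mul_pos pa pb) pw⟩⟩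
  exact ⟨div_pos pA pQ, div_pos pB pQ, div_pos pw pQ⟩

end SingleLetter

/-! ### Tensorisation -/

section Tensor

variable {PU : U → ℝ} {PU1 : U → U1 → ℝ} {PU2 : U → U2 → ℝ} {PS : AS → ℝ}
  {PZ : U → U1 → U2 → AS → AZ → ℝ}

/-- The `n`-letter channel `P^n_{ZS | U U1 U2}` for a fixed sequence `u`. -/
def nW (PS : AS → ℝ) (PZ : U → U1 → U2 → AS → AZ → ℝ) {n : ℕ} (u : Fin n → U)
    (a : Fin n → U1) (b : Fin n → U2) (y : (Fin n → AZ) × (Fin n → AS)) : ℝ :=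
  ∏ i, slW PS PZ (u i) (a i) (b i) (y.1 i, y.2 i)

theorem sum_pi_prod {ι X : Type*} [Fintype ι] [DecidableEq ι] [Fintype X] (f : ι → X → ℝ) :
    ∑ c : ι → X, ∏ i, f i (c i) = ∏ i, ∑ x, f i x := by
  rw [← Fintype.piFinset_univ, ← Finset.prod_univ_sum (fun _ => Finset.univ) f]

theorem isPmf_pi {ι X : Type*} [Fintype ι] [DecidableEq ι] [Fintype X] {p : ι → X → ℝ}
    (hp : ∀ i, IsPmf (p i)) : IsPmf (fun c : ι → X => ∏ i, p i (c i)) :=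
  ⟨fun _ => Finset.prod_nonneg fun i _ => (hp i).1 _, sum_prod_eq_one p fun i => (hp i).2⟩

theorem nW_isPmf (hPS : IsPmf PS) (hPZ : ∀ u u1 u2 s, IsPmf (PZ u u1 u2 s)) {n : ℕ}
    (u : Fin n → U) (a : Fin n → U1) (b : Fin n → U2) : IsPmf (nW PS PZ u a b) := by
  refine ⟨fun y => Finset.prod_nonneg fun i _ => mul_nonneg ((hPZ _ _ _ _).1 _) (hPS.1 _), ?_⟩
  rw [Fintype.sum_prod_type_right]
  simp only [nW]
  simp_rw [fun s : Fin n → AS => sum_pi_prod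
    (fun i z => slW PS PZ (u i) (a i) (b i) (z, s i))]
  rw [sum_pi_prod (fun i s => ∑ z, slW PS PZ (u i) (a i) (b i) (z, s))]
  simp [slW, ← Finset.sum_mul, (hPZ _ _ _ _).2, hPS.2]

theorem outA_nW {n : ℕ} (u : Fin n → U) (a : Fin n → U1) (y : (Fin n → AZ) × (Fin n → AS)) :
    outA (fun b : Fin n → U2 => ∏ i, PU2 (u i) (b i)) (nW PS PZ u) a y
      = ∏ i, outA (PU2 (u i)) (slW PS PZ (u i)) (a i) (y.1 i, y.2 i) := by
  simp only [outA, nW, ← Finset.prod_mul_distrib]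
  exact sum_pi_prod (fun i b => PU2 (u i) b * slW PS PZ (u i) (a i) b (y.1 i, y.2 i))

theorem outB_nW {n : ℕ} (u : Fin n → U) (b : Fin n → U2) (y : (Fin n → AZ) × (Fin n → AS)) :
    outB (fun a : Fin n → U1 => ∏ i, PU1 (u i) (a i)) (nW PS PZ u) b y
      = ∏ i, outB (PU1 (u i)) (slW PS PZ (u i)) (b i) (y.1 i, y.2 i) := by
  simp only [outB, nW, ← Finset.prod_mul_distrib]
  exact sum_pi_prod (fun i a => PU1 (u i) a * slW PS PZ (u i) a (b i) (y.1 i, y.2 i))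

theorem outQ_nW {n : ℕ} (u : Fin n → U) (y : (Fin n → AZ) × (Fin n → AS)) :
    outQ (fun a : Fin n → U1 => ∏ i, PU1 (u i) (a i)) (fun b : Fin n → U2 => ∏ i, PU2 (u i) (b i))
      (nW PS PZ u) y
      = ∏ i, outQ (PU1 (u i)) (PU2 (u i)) (slW PS PZ (u i)) (y.1 i, y.2 i) := by
  simp only [outQ, nW, ← Finset.prod_mul_distrib]
  simp_rw [fun a : Fin n → U1 => sum_pi_prod
    (fun i b => PU1 (u i) (a i) * PU2 (u i) b * slW PS PZ (u i) (a i) b (y.1 i, y.2 i))]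
  exact sum_pi_prod
    (fun i a => ∑ b, PU1 (u i) a * PU2 (u i) b * slW PS PZ (u i) a b (y.1 i, y.2 i))

/-- The `n`-letter moment of a product-form ratio is the `n`-th power of the single-letter
moment. -/
theorem moment_tensor {n : ℕ} (α : ℝ) (r : U → U1 → U2 → AZ → AS → ℝ)
    (hr : ∀ u a b z s, 0 ≤ r u a b z s) :
    ∑ u : Fin n → U, (∏ i, PU (u i)) * ∑ a : Fin n → U1, ∑ b : Fin n → U2,
        ∑ y : (Fin n → AZ) × (Fin n → AS), (∏ i, PU1 (u i) (a i)) * (∏ i, PU2 (u i) (b i)) *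
          nW PS PZ u a b y * (∏ i, r (u i) (a i) (b i) (y.1 i) (y.2 i)) ^ α
      = (∑ ω : O5Z U U1 U2 AS AZ, slJointZ PU PU1 PU2 PS PZ ω *
          r ω.u ω.u1 ω.u2 ω.z ω.s ^ α) ^ n := by
  have e : ∀ (u : Fin n → U) (a : Fin n → U1) (b : Fin n → U2) (z : Fin n → AZ) (s : Fin n → AS),
      (∏ i, PU (u i)) * ((∏ i, PU1 (u i) (a i)) * (∏ i, PU2 (u i) (b i)) *
          nW PS PZ u a b (z, s) * (∏ i, r (u i) (a i) (b i) (z i) (s i)) ^ α)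
        = ∏ i, (slJointZ PU PU1 PU2 PS PZ (u i, a i, b i, s i, z i) *
          r (u i) (a i) (b i) (z i) (s i) ^ α) := by
    intro u a b z s
    rw [← Real.finsetProd_rpow _ _ (fun i _ => hr _ _ _ _ _)]
    simp only [nW, ← Finset.prod_mul_distrib]
    refine Finset.prod_congr rfl fun i _ => ?_
    simp only [slJointZ, slW, O5Z.u, O5Z.u1, O5Z.u2, O5Z.s, O5Z.z]
    ring
  have hR : ∑ ω : O5Z U U1 U2 AS AZ, slJointZ PU PU1 PU2 PS PZ ω * r ω.u ω.u1 ω.u2 ω.z ω.s ^ α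
      = ∑ u, ∑ a, ∑ b, ∑ s, ∑ z, slJointZ PU PU1 PU2 PS PZ (u, a, b, s, z) * r u a b z s ^ α := by
    simp only [Fintype.sum_prod_type, O5Z.u, O5Z.u1, O5Z.u2, O5Z.s, O5Z.z]
  rw [hR]
  simp only [Finset.mul_sum, Fintype.sum_prod_type_right, e]
  simp_rw [fun (u : Fin n → U) (a : Fin n → U1) (b : Fin n → U2) (s : Fin n → AS) =>
      sum_pi_prod (fun i z => slJointZ PU PU1 PU2 PS PZ (u i, a i, b i, s i, z) *
        r (u i) (a i) (b i) z (s i) ^ α),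
    fun (u : Fin n → U) (a : Fin n → U1) (b : Fin n → U2) =>
      sum_pi_prod (fun i s => ∑ z, slJointZ PU PU1 PU2 PS PZ (u i, a i, b i, s, z) *
        r (u i) (a i) (b i) z s ^ α),
    fun (u : Fin n → U) (a : Fin n → U1) =>
      sum_pi_prod (fun i b => ∑ s, ∑ z, slJointZ PU PU1 PU2 PS PZ (u i, a i, b, s, z) *
        r (u i) (a i) b z s ^ α),
    fun (u : Fin n → U) =>
      sum_pi_prod (fun i a => ∑ b, ∑ s, ∑ z, slJointZ PU PU1 PU2 PS PZ (u i, a, b, s, z) *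
        r (u i) a b z s ^ α)]
  rw [sum_pi_prod (fun (_ : Fin n) u => ∑ a, ∑ b, ∑ s, ∑ z,
    slJointZ PU PU1 PU2 PS PZ (u, a, b, s, z) * r u a b z s ^ α)]
  simp only [Finset.prod_const, Finset.card_univ, Fintype.card_fin]

/-- Expected divergence for one cloud centre: a single `P_U^n` codeword together with its two
satellite codebooks of sizes `M1` and `M2`. -/
def cloudKL (PU : U → ℝ) (PU1 : U → U1 → ℝ) (PU2 : U → U2 → ℝ) (PS : AS → ℝ)
    (PZ : U → U1 → U2 → AS → AZ → ℝ) (n M1 M2 : ℕ) : ℝ :=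
  ∑ u : Fin n → U, (∏ i, PU (u i)) *
    ∑ d1 : Fin M1 → Fin n → U1, ∑ d2 : Fin M2 → Fin n → U2,
      (∏ l1, ∏ i, PU1 (u i) (d1 l1 i)) * (∏ l2, ∏ i, PU2 (u i) (d2 l2 i)) *
        KL (outInd (nW PS PZ u) d1 d2)
          (outQ (fun a : Fin n → U1 => ∏ i, PU1 (u i) (a i))
            (fun b : Fin n → U2 => ∏ i, PU2 (u i) (b i)) (nW PS PZ u))

/-- Each cloud index contributes the same expected divergence, the clouds being i.i.d. -/
theorem sum_cbProb_KL (hPU : IsPmf PU) (hPU1 : IsKernel PU1) (hPU2 : IsKernel PU2)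
    (n M0 M1 M2 : ℕ) (l : Fin M0) :
    ∑ c : Fin M0 → Fin n → U, ∑ c1 : Fin M0 → Fin M1 → Fin n → U1,
      ∑ c2 : Fin M0 → Fin M2 → Fin n → U2, cbProb PU PU1 PU2 c c1 c2 *
        KL (inducedZS PS PZ c c1 c2 l) (idealZS PU1 PU2 PS PZ (c l))
      = cloudKL PU PU1 PU2 PS PZ n M1 M2 := by
  let G : (Fin n → U) → (Fin M1 → Fin n → U1) → (Fin M2 → Fin n → U2) → ℝ := fun u d1 d2 =>
    KL (outInd (nW PS PZ u) d1 d2)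
      (outQ (fun a : Fin n → U1 => ∏ i, PU1 (u i) (a i))
        (fun b : Fin n → U2 => ∏ i, PU2 (u i) (b i)) (nW PS PZ u))
  have hG : ∀ (c : Fin M0 → Fin n → U) (c1 : Fin M0 → Fin M1 → Fin n → U1)
      (c2 : Fin M0 → Fin M2 → Fin n → U2),
      KL (inducedZS PS PZ c c1 c2 l) (idealZS PU1 PU2 PS PZ (c l)) = G (c l) (c1 l) (c2 l) := by
    intro c c1 c2
    have e1 : inducedZS PS PZ c c1 c2 l = outInd (nW PS PZ (c l)) (c1 l) (c2 l) := by
      funext y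
      simp only [inducedZS, outInd, nW, slW]
    have e2 : idealZS PU1 PU2 PS PZ (c l)
        = outQ (fun a : Fin n → U1 => ∏ i, PU1 (c l i) (a i))
          (fun b : Fin n → U2 => ∏ i, PU2 (c l i) (b i)) (nW PS PZ (c l)) := by
      funext y
      simp only [idealZS, outQ, nW, slW]
    rw [e1, e2]
  have s1 : ∀ u : Fin n → U,
      ∑ d : Fin M1 → Fin n → U1, ∏ l1, ∏ i, PU1 (u i) (d l1 i) = 1 := by
    intro u
    have h := isPmf_pi (p := fun i => PU1 (u i)) fun i => hPU1 (u i)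
    exact sum_prod_eq_one (fun (_ : Fin M1) (a : Fin n → U1) => ∏ i, PU1 (u i) (a i))
      fun _ => h.2
  have s2 : ∀ u : Fin n → U,
      ∑ d : Fin M2 → Fin n → U2, ∏ l2, ∏ i, PU2 (u i) (d l2 i) = 1 := by
    intro u
    have h := isPmf_pi (p := fun i => PU2 (u i)) fun i => hPU2 (u i)
    exact sum_prod_eq_one (fun (_ : Fin M2) (a : Fin n → U2) => ∏ i, PU2 (u i) (a i))
      fun _ => h.2
  simp_rw [hG, cbProb, mul_assoc, ← Finset.mul_sum]
  simp_rw [fun (c : Fin M0 → Fin n → U) (c1 : Fin M0 → Fin M1 → Fin n → U1) =>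
    sum_prod_marginal (fun l' (d : Fin M2 → Fin n → U2) => ∏ l2, ∏ i, PU2 (c l' i) (d l2 i))
      (fun l' => s2 (c l')) l (G (c l) (c1 l))]
  simp_rw [fun (c : Fin M0 → Fin n → U) =>
    sum_prod_marginal (fun l' (d : Fin M1 → Fin n → U1) => ∏ l1, ∏ i, PU1 (c l' i) (d l1 i))
      (fun l' => s1 (c l')) l
      (fun d1 => ∑ d2 : Fin M2 → Fin n → U2, (∏ l2, ∏ i, PU2 (c l i) (d2 l2 i)) *
        G (c l) d1 d2)]
  rw [sum_prod_marginal (fun (_ : Fin M0) (u : Fin n → U) => ∏ i, PU (u i))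
    (fun _ => (isPmf_pi fun _ => hPU).2) l (fun u =>
      ∑ d1 : Fin M1 → Fin n → U1, (∏ l1, ∏ i, PU1 (u i) (d1 l1 i)) *
        ∑ d2 : Fin M2 → Fin n → U2, (∏ l2, ∏ i, PU2 (u i) (d2 l2 i)) * G u d1 d2)]
  simp only [cloudKL, Finset.mul_sum, mul_assoc, G]

theorem cloudKL_nonneg (hPU : IsPmf PU) (hPU1 : IsKernel PU1) (hPU2 : IsKernel PU2)
    (hPS : IsPmf PS) (hPZ : ∀ u u1 u2 s, IsPmf (PZ u u1 u2 s)) {n M1 M2 : ℕ} (hM1 : 0 < M1)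
    (hM2 : 0 < M2) : 0 ≤ cloudKL PU PU1 PU2 PS PZ n M1 M2 := by
  refine Finset.sum_nonneg fun u _ => mul_nonneg (Finset.prod_nonneg fun i _ => hPU.1 _) ?_
  exact expect_KL_nonneg (isPmf_pi fun i => hPU1 (u i)) (isPmf_pi fun i => hPU2 (u i))
    (nW_isPmf hPS hPZ u) hM1 hM2

theorem cloudKL_le (hPU : IsPmf PU) (hPU1 : IsKernel PU1) (hPU2 : IsKernel PU2)
    (hPS : IsPmf PS) (hPZ : ∀ u u1 u2 s, IsPmf (PZ u u1 u2 s)) {n M1 M2 : ℕ} (hM1 : 0 < M1)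
    (hM2 : 0 < M2) {α : ℝ} (hα : 0 < α) (hα1 : α ≤ 1) :
    cloudKL PU PU1 PU2 PS PZ n M1 M2 ≤ (α * Real.log 2)⁻¹ *
      (((M1 : ℝ)⁻¹) ^ α * (∑ ω : O5Z U U1 U2 AS AZ, slJointZ PU PU1 PU2 PS PZ ω *
          (outA (PU2 ω.u) (slW PS PZ ω.u) ω.u1 (ω.z, ω.s) /
            outQ (PU1 ω.u) (PU2 ω.u) (slW PS PZ ω.u) (ω.z, ω.s)) ^ α) ^ n
      + ((M2 : ℝ)⁻¹) ^ α * (∑ ω : O5Z U U1 U2 AS AZ, slJointZ PU PU1 PU2 PS PZ ω *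
          (outB (PU1 ω.u) (slW PS PZ ω.u) ω.u2 (ω.z, ω.s) /
            outQ (PU1 ω.u) (PU2 ω.u) (slW PS PZ ω.u) (ω.z, ω.s)) ^ α) ^ n
      + ((M1 : ℝ)⁻¹ * (M2 : ℝ)⁻¹) ^ α *
        (∑ ω : O5Z U U1 U2 AS AZ, slJointZ PU PU1 PU2 PS PZ ω *
          (slW PS PZ ω.u ω.u1 ω.u2 (ω.z, ω.s) /
            outQ (PU1 ω.u) (PU2 ω.u) (slW PS PZ ω.u) (ω.z, ω.s)) ^ α) ^ n) := by
  have hW : ∀ u a b y, 0 ≤ slW PS PZ u a b y := fun u a b y =>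
    mul_nonneg ((hPZ _ _ _ _).1 _) (hPS.1 _)
  have hQ := fun u y => outQ_nonneg (hPU1 u) (hPU2 u) (hW u) y
  rw [← moment_tensor (n := n) (PU := PU) (PU1 := PU1) (PU2 := PU2) (PS := PS) (PZ := PZ) α
      (fun u a b z s => outA (PU2 u) (slW PS PZ u) a (z, s) /
        outQ (PU1 u) (PU2 u) (slW PS PZ u) (z, s))
      (fun u a b z s => div_nonneg (outA_nonneg (hPU2 u) (hW u) _ _) (hQ _ _)),
    ← moment_tensor (n := n) (PU := PU) (PU1 := PU1) (PU2 := PU2) (PS := PS) (PZ := PZ) α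
      (fun u a b z s => outB (PU1 u) (slW PS PZ u) b (z, s) /
        outQ (PU1 u) (PU2 u) (slW PS PZ u) (z, s))
      (fun u a b z s => div_nonneg (outB_nonneg (hPU1 u) (hW u) _ _) (hQ _ _)),
    ← moment_tensor (n := n) (PU := PU) (PU1 := PU1) (PU2 := PU2) (PS := PS) (PZ := PZ) α
      (fun u a b z s => slW PS PZ u a b (z, s) /
        outQ (PU1 u) (PU2 u) (slW PS PZ u) (z, s))
      (fun u a b z s => div_nonneg (hW _ _ _ _) (hQ _ _))]
  have hu : ∀ u : Fin n → U, _ := fun u =>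
    mul_le_mul_of_nonneg_left
      (expect_KL_le (isPmf_pi fun i => hPU1 (u i)) (isPmf_pi fun i => hPU2 (u i))
        (fun a b => (nW_isPmf hPS hPZ u a b).1) hM1 hM2 hα hα1)
      (Finset.prod_nonneg fun i (_ : i ∈ Finset.univ) => hPU.1 (u i))
  refine (Finset.sum_le_sum fun u _ => hu u).trans_eq ?_
  simp only [outA_nW, outB_nW, outQ_nW, Finset.prod_div_distrib]
  rw [Finset.mul_sum, Finset.mul_sum, Finset.mul_sum, ← Finset.sum_add_distrib,
    ← Finset.sum_add_distrib, Finset.mul_sum]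
  refine Finset.sum_congr rfl fun u _ => ?_
  have e : ∀ a b y, nW PS PZ u a b y = ∏ i, slW PS PZ (u i) (a i) (b i) (y.1 i, y.2 i) :=
    fun _ _ _ => rfl
  simp only [e]
  ring

end Tensor

/-! ### The exponential bound -/

/-- **Lemma 1 (channel resolvability for superposition random codebooks).**
If `R1 > I(U1;Z|S,U)`, `R2 > I(U2;Z|S,U)` and `R1 + R2 > I(U1,U2;Z|S,U)`, then for every
family of pmfs `Pbar n` on the cloud indices, the expected weighted KL divergence between
the induced and the ideal output distributions vanishes exponentially fast in `n`. -/
theorem resolvability_superposition (PU : U → ℝ) (PU1 : U → U1 → ℝ) (PU2 : U → U2 → ℝ)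
    (PS : AS → ℝ) (PZ : U → U1 → U2 → AS → AZ → ℝ)
    (hPU : IsPmf PU) (hPU1 : IsKernel PU1) (hPU2 : IsKernel PU2) (hPS : IsPmf PS)
    (hPZ : ∀ u u1 u2 s, IsPmf (PZ u u1 u2 s))
    (R0 R1 R2 : ℝ) (hR0 : 0 < R0) (hR1 : 0 < R1) (hR2 : 0 < R2)
    (h1 : cMI (slJointZ PU PU1 PU2 PS PZ) (fun ω => ω.u1) (fun ω => ω.z)
        (fun ω => (ω.s, ω.u)) < R1)
    (h2 : cMI (slJointZ PU PU1 PU2 PS PZ) (fun ω => ω.u2) (fun ω => ω.z)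
        (fun ω => (ω.s, ω.u)) < R2)
    (h12 : cMI (slJointZ PU PU1 PU2 PS PZ) (fun ω => (ω.u1, ω.u2)) (fun ω => ω.z)
        (fun ω => (ω.s, ω.u)) < R1 + R2)
    (Pbar : (n : ℕ) → Fin ⌈(2 : ℝ) ^ ((n : ℝ) * R0)⌉₊ → ℝ)
    (hPbar : ∀ n, IsPmf (Pbar n)) :
    ∃ C γ : ℝ, 0 < C ∧ 0 < γ ∧ ∀ n : ℕ,
      |∑ c : Fin ⌈(2 : ℝ) ^ ((n : ℝ) * R0)⌉₊ → Fin n → U,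
        ∑ c1 : Fin ⌈(2 : ℝ) ^ ((n : ℝ) * R0)⌉₊ → Fin ⌈(2 : ℝ) ^ ((n : ℝ) * R1)⌉₊ → Fin n → U1,
        ∑ c2 : Fin ⌈(2 : ℝ) ^ ((n : ℝ) * R0)⌉₊ → Fin ⌈(2 : ℝ) ^ ((n : ℝ) * R2)⌉₊ → Fin n → U2,
          cbProb PU PU1 PU2 c c1 c2 *
            ∑ l, Pbar n l *
              KL (inducedZS PS PZ c c1 c2 l) (idealZS PU1 PU2 PS PZ (c l))| ≤
        C * Real.exp (-γ * (n : ℝ)) := by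
  have hp := slJointZ_isPmf hPU hPU1 hPU2 hPS hPZ
  rw [cMI_u1 hPU hPU1 hPU2 hPS hPZ] at h1
  rw [cMI_u2 hPU hPU1 hPU2 hPS hPZ] at h2
  rw [cMI_u12 hPU hPU1 hPU2 hPS hPZ] at h12
  have hr := ratios_pos (PU := PU) hPU1 hPU2 hPS hPZ
  have hα1 : ∀ᶠ α in nhdsWithin (0 : ℝ) (Set.Ioi 0), α ≤ 1 :=
    mem_nhdsWithin_of_mem_nhds (Iic_mem_nhds one_pos)
  obtain ⟨α, ⟨⟨⟨g1, g2⟩, g12⟩, hα1⟩, hα⟩ :=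
    ((((eventually_moment_lt_one hp (fun ω h => (hr ω h).1) h1).and
      (eventually_moment_lt_one hp (fun ω h => (hr ω h).2.1) h2)).and
      (eventually_moment_lt_one hp (fun ω h => (hr ω h).2.2) h12)).and hα1).and
      self_mem_nhdsWithin |>.exists
  have hα : 0 < α := hα
  have hlog2 : 0 < Real.log 2 := Real.log_pos (by norm_num)
  have hbd := fun (n : ℕ) {M1 M2 : ℕ} (hM1 : 0 < M1) (hM2 : 0 < M2) =>
    cloudKL_le (n := n) hPU hPU1 hPU2 hPS hPZ hM1 hM2 hα hα1
  have hf : ∀ r : O5Z U U1 U2 AS AZ → ℝ, (∀ ω, 0 < slJointZ PU PU1 PU2 PS PZ ω → 0 < r ω) →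
      0 ≤ ∑ ω, slJointZ PU PU1 PU2 PS PZ ω * r ω ^ α := by
    intro r hr
    refine Finset.sum_nonneg fun ω _ => ?_
    rcases (hp.1 ω).eq_or_lt with h0 | h0
    · rw [← h0, zero_mul]
    · exact mul_nonneg h0.le (Real.rpow_nonneg (hr ω h0).le _)
  have f1n := hf _ fun ω h => (hr ω h).1
  have f2n := hf _ fun ω h => (hr ω h).2.1
  have f12n := hf _ fun ω h => (hr ω h).2.2
  generalize (∑ ω : O5Z U U1 U2 AS AZ, slJointZ PU PU1 PU2 PS PZ ω *
    (outA (PU2 ω.u) (slW PS PZ ω.u) ω.u1 (ω.z, ω.s) /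
      outQ (PU1 ω.u) (PU2 ω.u) (slW PS PZ ω.u) (ω.z, ω.s)) ^ α) = f1 at g1 hbd f1n
  generalize (∑ ω : O5Z U U1 U2 AS AZ, slJointZ PU PU1 PU2 PS PZ ω *
    (outB (PU1 ω.u) (slW PS PZ ω.u) ω.u2 (ω.z, ω.s) /
      outQ (PU1 ω.u) (PU2 ω.u) (slW PS PZ ω.u) (ω.z, ω.s)) ^ α) = f2 at g2 hbd f2n
  generalize (∑ ω : O5Z U U1 U2 AS AZ, slJointZ PU PU1 PU2 PS PZ ω *
    (slW PS PZ ω.u ω.u1 ω.u2 (ω.z, ω.s) /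
      outQ (PU1 ω.u) (PU2 ω.u) (slW PS PZ ω.u) (ω.z, ω.s)) ^ α) = f12 at g12 hbd f12n
  -- A common geometric ratio, kept away from `0` so that its logarithm is meaningful.
  obtain ⟨ρ, hρ0, hρ1, r1, r2, r12⟩ : ∃ ρ : ℝ, 0 < ρ ∧ ρ < 1 ∧
      (2 : ℝ) ^ (-(α * R1)) * f1 ≤ ρ ∧ (2 : ℝ) ^ (-(α * R2)) * f2 ≤ ρ ∧
      (2 : ℝ) ^ (-(α * (R1 + R2))) * f12 ≤ ρ :=
    ⟨max (max (1 / 2) ((2 : ℝ) ^ (-(α * R1)) * f1))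
      (max ((2 : ℝ) ^ (-(α * R2)) * f2) ((2 : ℝ) ^ (-(α * (R1 + R2))) * f12)),
      lt_of_lt_of_le (by norm_num) ((le_max_left _ _).trans (le_max_left _ _)),
      max_lt (max_lt (by norm_num) g1) (max_lt g2 g12),
      (le_max_right _ _).trans (le_max_left _ _),
      (le_max_left _ _).trans (le_max_right _ _),
      (le_max_right _ _).trans (le_max_right _ _)⟩
  refine ⟨(α * Real.log 2)⁻¹ * 3, -Real.log ρ, by positivity,
    neg_pos.2 (Real.log_neg hρ0 hρ1), fun n => ?_⟩
  have hM : ∀ R : ℝ, 0 < ⌈(2 : ℝ) ^ ((n : ℝ) * R)⌉₊ := fun R =>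
    Nat.ceil_pos.2 (Real.rpow_pos_of_pos (by norm_num) _)
  have hMinv : ∀ R : ℝ, ((⌈(2 : ℝ) ^ ((n : ℝ) * R)⌉₊ : ℝ))⁻¹ ≤ (2 : ℝ) ^ (-((n : ℝ) * R)) := by
    intro R
    rw [Real.rpow_neg (by norm_num)]
    exact inv_anti₀ (Real.rpow_pos_of_pos (by norm_num) _) (Nat.le_ceil _)
  have hterm : ∀ {x R f : ℝ}, 0 ≤ x → x ≤ (2 : ℝ) ^ (-((n : ℝ) * R)) → 0 ≤ f →
      (2 : ℝ) ^ (-(α * R)) * f ≤ ρ → x ^ α * f ^ n ≤ ρ ^ n := by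
    intro x R f hx hxR hf hρ
    calc x ^ α * f ^ n ≤ ((2 : ℝ) ^ (-((n : ℝ) * R))) ^ α * f ^ n :=
          mul_le_mul_of_nonneg_right (Real.rpow_le_rpow hx hxR hα.le) (pow_nonneg hf n)
      _ = ((2 : ℝ) ^ (-(α * R)) * f) ^ n := by
          rw [mul_pow, ← Real.rpow_mul (by norm_num), ← Real.rpow_mul_natCast (by norm_num)]
          congr 2
          ring
      _ ≤ ρ ^ n := pow_le_pow_left₀ (mul_nonneg (Real.rpow_nonneg (by norm_num) _) hf) hρ n
  have hexp : Real.exp (-(-Real.log ρ) * (n : ℝ)) = ρ ^ n := by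
    rw [neg_neg, mul_comm, Real.exp_nat_mul, Real.exp_log hρ0]
  have hsum : ∀ (M0 M1 M2 : ℕ) (P : Fin M0 → ℝ), ∑ l, P l = 1 →
      ∑ c : Fin M0 → Fin n → U, ∑ c1 : Fin M0 → Fin M1 → Fin n → U1,
        ∑ c2 : Fin M0 → Fin M2 → Fin n → U2, cbProb PU PU1 PU2 c c1 c2 *
          ∑ l, P l * KL (inducedZS PS PZ c c1 c2 l) (idealZS PU1 PU2 PS PZ (c l))
        = cloudKL PU PU1 PU2 PS PZ n M1 M2 := by
    intro M0 M1 M2 P hP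
    have e : ∀ l, P l * cloudKL PU PU1 PU2 PS PZ n M1 M2 =
        ∑ c : Fin M0 → Fin n → U, ∑ c1 : Fin M0 → Fin M1 → Fin n → U1,
        ∑ c2 : Fin M0 → Fin M2 → Fin n → U2, cbProb PU PU1 PU2 c c1 c2 *
          (P l * KL (inducedZS PS PZ c c1 c2 l) (idealZS PU1 PU2 PS PZ (c l))) := by
      intro l
      rw [← sum_cbProb_KL hPU hPU1 hPU2 n M0 M1 M2 l]
      simp_rw [Finset.mul_sum, mul_left_comm]
    have e' : cloudKL PU PU1 PU2 PS PZ n M1 M2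
        = ∑ l, P l * cloudKL PU PU1 PU2 PS PZ n M1 M2 := by
      rw [← Finset.sum_mul, hP, one_mul]
    symm
    rw [e', Finset.sum_congr rfl fun l _ => e l, Finset.sum_comm]
    refine Finset.sum_congr rfl fun c _ => ?_
    rw [Finset.sum_comm]
    refine Finset.sum_congr rfl fun c1 _ => ?_
    rw [Finset.sum_comm]
    exact Finset.sum_congr rfl fun c2 _ => (Finset.mul_sum _ _ _).symm
  rw [hsum _ _ _ _ (hPbar n).2, abs_of_nonneg
    (cloudKL_nonneg hPU hPU1 hPU2 hPS hPZ (hM R1) (hM R2)), hexp, mul_assoc]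
  refine (hbd n (hM R1) (hM R2)).trans (mul_le_mul_of_nonneg_left ?_ (by positivity))
  have b12 : ((⌈(2 : ℝ) ^ ((n : ℝ) * R1)⌉₊ : ℝ))⁻¹ * ((⌈(2 : ℝ) ^ ((n : ℝ) * R2)⌉₊ : ℝ))⁻¹
      ≤ (2 : ℝ) ^ (-((n : ℝ) * (R1 + R2))) := by
    rw [mul_add, neg_add, Real.rpow_add (by norm_num)]
    exact mul_le_mul (hMinv R1) (hMinv R2) (by positivity) (Real.rpow_nonneg (by norm_num) _)
  have t1 := hterm (by positivity) (hMinv R1) f1n r1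
  have t2 := hterm (by positivity) (hMinv R2) f2n r2
  have t12 := hterm (by positivity) b12 f12n r12
  linarith

end Paper
end
end

section
/- Example 1, first channel (Coding scheme 1 beats Coding scheme 2): Consider the binary SD-MAWC with X1 = X2 = S-alphabet = Y-alphabet = Z-alphabet = {0,1}, S ~ Bernoulli(p) i.i.d., legitimate output Y = X1 when S = 0 and Y = X2 when S = 1, and eavesdropper output Z = X2 (both outputs deterministic given the inputs and state). Then the rate pair (min{1 - p, 1 - h(p)}, 0) belongs to the region R_1 (achievable by Coding scheme 1); moreover every pair (R1, 0) in R_2 satisfies R1 <= I(U1;Y|U2) for some admissible distribution, and for p sufficiently large the maximum of I(U1;Y|U2) over admissible distributions is strictly smaller than min{1 - p, 1 - h(p)}, so the pair (min{1 - p, 1 - h(p)}, 0) is not in R_2. -/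
/-!
The pair `(min(1-p, 1-h(p)), 0)` is obtained from the third subregion of `R_1` with `V = S`,
constant `U` and independent fair bits `X1 = U1`, `X2 = U2`. Then `I(V;Y) = I(V;Z,U,U2) = 0`,
`I(U1;Y|S,U2) = 1 - p`, `I(U1;Z|S,U2) = 0`, and `R_SUM = min(1, 1 - h(p))`. All nine variables
are functions of `(S, U1, U2)`, so these entropies are computed on eight points (`H_comp`,
`jointAuxR1_eq`, `mem_R1`).

Every point of a subregion of `R_2` satisfies `R1 ≤ I(U1;Y|U2)`. The numbers bounded by
`I(U1;Y|U2)` for some law form a lower set of `ℝ`, which is convex, so the bound extends to the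
convex hull (`R2_bound`).

For the strict gap, write `ε = 1 - p`. Given `(U1, U2) = (a, b)`, the output is one with
probability `ε α + (1-ε) β`, where `α`, `β` depend only on `a` and only on `b`, respectively.
Conditionally on `U2 = b`, the information is at most the average relative entropy to any fixed
reference law; the Bernoulli law with parameter `r = ε/2 + (1-ε) β` is within `ε/2` of every
output law, and both its masses are at least `ε/2`. The χ²-bound gives relative entropy at most
`(ε²/4) / (r (1-r) ln 2)`, which is at most `0.97 ε` once `ε ≤ 1/2`
(`kl_mid_bound`, `cMI_le`). Finally `h(p) ≤ p` near `p = 1`, so the minimum there is `1 - p`.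
-/

open scoped BigOperators

noncomputable section

namespace Paper

/-- A length-`n` two-sender code with message sets `Fin m1`, `Fin m2`: encoders map a
message and the state sequence to a channel-input sequence, and the decoder maps the
channel output sequence to a message pair. -/
structure Code2 (A1 A2 AS AY AZ : Type) (n m1 m2 : ℕ) where
  enc1 : Fin m1 → (Fin n → AS) → Fin n → A1
  enc2 : Fin m2 → (Fin n → AS) → Fin n → A2
  dec : (Fin n → AY) → Fin m1 × Fin m2

/-- Sample space carrying the auxiliary random variables `(V,U,U1,U2,X1,X2,S,Y,Z)`. -/
abbrev O9 (V U U1 U2 A1 A2 AS AY AZ : Type) : Type :=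
  V × U × U1 × U2 × A1 × A2 × AS × AY × AZ

namespace O9
variable {V U U1 U2 A1 A2 AS AY AZ : Type}
def v (ω : O9 V U U1 U2 A1 A2 AS AY AZ) : V := ω.1
def u (ω : O9 V U U1 U2 A1 A2 AS AY AZ) : U := ω.2.1
def u1 (ω : O9 V U U1 U2 A1 A2 AS AY AZ) : U1 := ω.2.2.1
def u2 (ω : O9 V U U1 U2 A1 A2 AS AY AZ) : U2 := ω.2.2.2.1
def x1 (ω : O9 V U U1 U2 A1 A2 AS AY AZ) : A1 := ω.2.2.2.2.1
def x2 (ω : O9 V U U1 U2 A1 A2 AS AY AZ) : A2 := ω.2.2.2.2.2.1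
def s (ω : O9 V U U1 U2 A1 A2 AS AY AZ) : AS := ω.2.2.2.2.2.2.1
def y (ω : O9 V U U1 U2 A1 A2 AS AY AZ) : AY := ω.2.2.2.2.2.2.2.1
def z (ω : O9 V U U1 U2 A1 A2 AS AY AZ) : AZ := ω.2.2.2.2.2.2.2.2
end O9

/-- Sample space carrying the auxiliary random variables `(U1,U2,X1,X2,S,Y,Z)`. -/
abbrev O7 (U1 U2 A1 A2 AS AY AZ : Type) : Type :=
  U1 × U2 × A1 × A2 × AS × AY × AZ

namespace O7
variable {U1 U2 A1 A2 AS AY AZ : Type}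
def u1 (ω : O7 U1 U2 A1 A2 AS AY AZ) : U1 := ω.1
def u2 (ω : O7 U1 U2 A1 A2 AS AY AZ) : U2 := ω.2.1
def x1 (ω : O7 U1 U2 A1 A2 AS AY AZ) : A1 := ω.2.2.1
def x2 (ω : O7 U1 U2 A1 A2 AS AY AZ) : A2 := ω.2.2.2.1
def s (ω : O7 U1 U2 A1 A2 AS AY AZ) : AS := ω.2.2.2.2.1
def y (ω : O7 U1 U2 A1 A2 AS AY AZ) : AY := ω.2.2.2.2.2.1
def z (ω : O7 U1 U2 A1 A2 AS AY AZ) : AZ := ω.2.2.2.2.2.2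
end O7

/-- An auxiliary joint law `P_S P_{V|S} P_U P_{U1|U} P_{U2|U} P_{X1|UU1S} P_{X2|UU2S}`
over arbitrary finite auxiliary alphabets. -/
structure AuxLawR1 (A1 A2 AS AY AZ : Type) [Fintype A1] [Fintype A2] [Fintype AS]
    [Fintype AY] [Fintype AZ] where
  V : Type
  U : Type
  U1 : Type
  U2 : Type
  [fV : Fintype V]
  [fU : Fintype U]
  [fU1 : Fintype U1]
  [fU2 : Fintype U2]
  [dV : DecidableEq V]
  [dU : DecidableEq U]
  [dU1 : DecidableEq U1]
  [dU2 : DecidableEq U2]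
  PV : AS → V → ℝ
  PU : U → ℝ
  PU1 : U → U1 → ℝ
  PU2 : U → U2 → ℝ
  PX1 : U → U1 → AS → A1 → ℝ
  PX2 : U → U2 → AS → A2 → ℝ
  hPV : IsKernel PV
  hPU : IsPmf PU
  hPU1 : IsKernel PU1
  hPU2 : IsKernel PU2
  hPX1 : ∀ u u1 s, IsPmf (PX1 u u1 s)
  hPX2 : ∀ u u2 s, IsPmf (PX2 u u2 s)

attribute [instance] AuxLawR1.fV AuxLawR1.fU AuxLawR1.fU1 AuxLawR1.fU2
  AuxLawR1.dV AuxLawR1.dU AuxLawR1.dU1 AuxLawR1.dU2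

/-- An auxiliary joint law `P_S P_{U1} P_{U2} P_{X1|U1S} P_{X2|U2S}` over arbitrary
finite auxiliary alphabets (for Coding scheme 2). -/
structure AuxLawR2 (A1 A2 AS AY AZ : Type) [Fintype A1] [Fintype A2] [Fintype AS]
    [Fintype AY] [Fintype AZ] where
  U1 : Type
  U2 : Type
  [fU1 : Fintype U1]
  [fU2 : Fintype U2]
  [dU1 : DecidableEq U1]
  [dU2 : DecidableEq U2]
  PU1 : U1 → ℝ
  PU2 : U2 → ℝ
  PX1 : U1 → AS → A1 → ℝ
  PX2 : U2 → AS → A2 → ℝ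
  hPU1 : IsPmf PU1
  hPU2 : IsPmf PU2
  hPX1 : ∀ u1 s, IsPmf (PX1 u1 s)
  hPX2 : ∀ u2 s, IsPmf (PX2 u2 s)

attribute [instance] AuxLawR2.fU1 AuxLawR2.fU2 AuxLawR2.dU1 AuxLawR2.dU2

variable {A1 A2 AS AY AZ : Type} [Fintype A1] [Fintype A2] [Fintype AS]
  [Fintype AY] [Fintype AZ] [DecidableEq A1] [DecidableEq A2] [DecidableEq AS]
  [DecidableEq AY] [DecidableEq AZ]

/-- Joint distribution of (uniform independent) messages, the i.i.d. state sequence and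
the memoryless channel outputs, induced by a code. -/
def jp2 (PS : AS → ℝ) (W : A1 → A2 → AS → AY × AZ → ℝ) {n m1 m2 : ℕ}
    (c : Code2 A1 A2 AS AY AZ n m1 m2) :
    Fin m1 × Fin m2 × (Fin n → AS) × (Fin n → AY) × (Fin n → AZ) → ℝ :=
  fun ω =>
    (m1 : ℝ)⁻¹ * (m2 : ℝ)⁻¹ * (∏ i, PS (ω.2.2.1 i)) *
      ∏ i, W (c.enc1 ω.1 ω.2.2.1 i) (c.enc2 ω.2.1 ω.2.2.1 i) (ω.2.2.1 i)
        (ω.2.2.2.1 i, ω.2.2.2.2 i)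

/-- Average probability of a decoding error. -/
def Perr2 (PS : AS → ℝ) (W : A1 → A2 → AS → AY × AZ → ℝ) {n m1 m2 : ℕ}
    (c : Code2 A1 A2 AS AY AZ n m1 m2) : ℝ :=
  ∑ ω, if c.dec ω.2.2.2.1 = (ω.1, ω.2.1) then 0 else jp2 PS W c ω

/-- Information leakage `I(M1,M2; Z^n)` to the eavesdropper. -/
def Leak2 (PS : AS → ℝ) (W : A1 → A2 → AS → AY × AZ → ℝ) {n m1 m2 : ℕ}
    (c : Code2 A1 A2 AS AY AZ n m1 m2) : ℝ :=
  MI (jp2 PS W c) (fun ω => (ω.1, ω.2.1)) (fun ω => ω.2.2.2.2)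

/-- `(R1,R2)` is achievable with causal CSI at both encoders under the strong secrecy
criterion. -/
def AchievableCSI (PS : AS → ℝ) (W : A1 → A2 → AS → AY × AZ → ℝ) (R : ℝ × ℝ) : Prop :=
  0 ≤ R.1 ∧ 0 ≤ R.2 ∧
    ∀ ε : ℝ, 0 < ε → ∃ n0 : ℕ, ∀ n : ℕ, n0 < n →
      ∃ c : Code2 A1 A2 AS AY AZ n ⌈(2 : ℝ) ^ ((n : ℝ) * R.1)⌉₊ ⌈(2 : ℝ) ^ ((n : ℝ) * R.2)⌉₊,
        Causal c.enc1 ∧ Causal c.enc2 ∧ Perr2 PS W c ≤ ε ∧ Leak2 PS W c ≤ ε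

/-- The strong-secrecy capacity region `C^{CSI-E}` (closure of the achievable pairs). -/
def CapCSIE (PS : AS → ℝ) (W : A1 → A2 → AS → AY × AZ → ℝ) : Set (ℝ × ℝ) :=
  closure {R | AchievableCSI PS W R}

section AuxR1
variable {V U U1 U2 : Type} [Fintype V] [Fintype U] [Fintype U1] [Fintype U2]
  [DecidableEq V] [DecidableEq U] [DecidableEq U1] [DecidableEq U2]

/-- The joint pmf `P_S P_{V|S} P_U P_{U1|U} P_{U2|U} P_{X1|UU1S} P_{X2|UU2S} W`. -/
def jointR1 (PS : AS → ℝ) (W : A1 → A2 → AS → AY × AZ → ℝ) (PV : AS → V → ℝ)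
    (PU : U → ℝ) (PU1 : U → U1 → ℝ) (PU2 : U → U2 → ℝ)
    (PX1 : U → U1 → AS → A1 → ℝ) (PX2 : U → U2 → AS → A2 → ℝ) :
    O9 V U U1 U2 A1 A2 AS AY AZ → ℝ :=
  fun ω => PS ω.s * PV ω.s ω.v * PU ω.u * PU1 ω.u ω.u1 * PU2 ω.u ω.u2 *
    PX1 ω.u ω.u1 ω.s ω.x1 * PX2 ω.u ω.u2 ω.s ω.x2 * W ω.x1 ω.x2 ω.s (ω.y, ω.z)

/-- `R_SUM = min{I(U1,U2;Y|V,U), I(V,U,U1,U2;Y) - I(V;S)}`. -/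
def Rsum (p : O9 V U U1 U2 A1 A2 AS AY AZ → ℝ) : ℝ :=
  min (cMI p (fun ω => (ω.u1, ω.u2)) (fun ω => ω.y) (fun ω => (ω.v, ω.u)))
    (MI p (fun ω => (ω.v, ω.u, ω.u1, ω.u2)) (fun ω => ω.y) -
      MI p (fun ω => ω.v) (fun ω => ω.s))

/-- The region `R_{11}`. -/
def regionR11 (p : O9 V U U1 U2 A1 A2 AS AY AZ → ℝ) : Set (ℝ × ℝ) :=
  {R | 0 ≤ R.1 ∧ 0 ≤ R.2 ∧ ∃ r11 r21 : ℝ, 0 ≤ r11 ∧ 0 ≤ r21 ∧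
    r11 + r21 ≤ MI p (fun ω => ω.v) (fun ω => ω.y) -
      MI p (fun ω => ω.v) (fun ω => (ω.u, ω.z)) ∧
    R.1 ≤ min (cMI p (fun ω => ω.u1) (fun ω => ω.y) (fun ω => (ω.v, ω.u, ω.u2)) -
        cMI p (fun ω => ω.u1) (fun ω => ω.z) (fun ω => (ω.s, ω.u)) + r11)
      (cMI p (fun ω => ω.u1) (fun ω => ω.y) (fun ω => (ω.v, ω.u, ω.u2))) ∧
    R.2 ≤ min (cMI p (fun ω => ω.u2) (fun ω => ω.y) (fun ω => (ω.v, ω.u, ω.u1)) -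
        cMI p (fun ω => ω.u2) (fun ω => ω.z) (fun ω => (ω.s, ω.u)) + r21)
      (cMI p (fun ω => ω.u2) (fun ω => ω.y) (fun ω => (ω.v, ω.u, ω.u1))) ∧
    R.1 + R.2 ≤ min (Rsum p -
        cMI p (fun ω => (ω.u1, ω.u2)) (fun ω => ω.z) (fun ω => (ω.s, ω.u)) + r11 + r21)
      (Rsum p)}

/-- The region `R_{12}` (wiretap coding not available at Encoder 1). -/
def regionR12 (p : O9 V U U1 U2 A1 A2 AS AY AZ → ℝ) : Set (ℝ × ℝ) :=
  {R | 0 ≤ R.1 ∧ 0 ≤ R.2 ∧ ∃ r11 r21 : ℝ, 0 ≤ r11 ∧ 0 ≤ r21 ∧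
    r11 + r21 ≤ MI p (fun ω => ω.v) (fun ω => ω.y) -
      MI p (fun ω => ω.v) (fun ω => (ω.z, ω.u, ω.u1)) ∧
    R.1 ≤ min (cMI p (fun ω => ω.u1) (fun ω => ω.y) (fun ω => (ω.v, ω.u, ω.u2))) r11 ∧
    R.2 ≤ min (cMI p (fun ω => ω.u2) (fun ω => ω.y) (fun ω => (ω.v, ω.u, ω.u1)) -
        cMI p (fun ω => ω.u2) (fun ω => ω.z) (fun ω => (ω.s, ω.u, ω.u1)) + r21)
      (cMI p (fun ω => ω.u2) (fun ω => ω.y) (fun ω => (ω.v, ω.u, ω.u1))) ∧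
    R.1 + R.2 ≤ min (min (Rsum p)
        (Rsum p - cMI p (fun ω => ω.u2) (fun ω => ω.z) (fun ω => (ω.s, ω.u, ω.u1)) + r21))
      (cMI p (fun ω => ω.u2) (fun ω => ω.y) (fun ω => (ω.v, ω.u, ω.u1)) -
        cMI p (fun ω => ω.u2) (fun ω => ω.z) (fun ω => (ω.s, ω.u, ω.u1)) + r11 + r21)}

/-- The region `R_{13}` (wiretap coding not available at Encoder 2). -/
def regionR13 (p : O9 V U U1 U2 A1 A2 AS AY AZ → ℝ) : Set (ℝ × ℝ) :=
  {R | 0 ≤ R.1 ∧ 0 ≤ R.2 ∧ ∃ r11 r21 : ℝ, 0 ≤ r11 ∧ 0 ≤ r21 ∧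
    r11 + r21 ≤ MI p (fun ω => ω.v) (fun ω => ω.y) -
      MI p (fun ω => ω.v) (fun ω => (ω.z, ω.u, ω.u2)) ∧
    R.1 ≤ min (cMI p (fun ω => ω.u1) (fun ω => ω.y) (fun ω => (ω.v, ω.u, ω.u2)) -
        cMI p (fun ω => ω.u1) (fun ω => ω.z) (fun ω => (ω.s, ω.u, ω.u2)) + r11)
      (cMI p (fun ω => ω.u1) (fun ω => ω.y) (fun ω => (ω.v, ω.u, ω.u2))) ∧
    R.2 ≤ min (cMI p (fun ω => ω.u2) (fun ω => ω.y) (fun ω => (ω.v, ω.u, ω.u1))) r21 ∧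
    R.1 + R.2 ≤ min (min (Rsum p)
        (Rsum p - cMI p (fun ω => ω.u1) (fun ω => ω.z) (fun ω => (ω.s, ω.u, ω.u2)) + r11))
      (cMI p (fun ω => ω.u1) (fun ω => ω.y) (fun ω => (ω.v, ω.u, ω.u2)) -
        cMI p (fun ω => ω.u1) (fun ω => ω.z) (fun ω => (ω.s, ω.u, ω.u2)) + r11 + r21)}

end AuxR1

/-- The joint law determined by an auxiliary-law datum. -/
def AuxLawR1.joint (L : AuxLawR1 A1 A2 AS AY AZ) (PS : AS → ℝ)
    (W : A1 → A2 → AS → AY × AZ → ℝ) : O9 L.V L.U L.U1 L.U2 A1 A2 AS AY AZ → ℝ :=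
  jointR1 PS W L.PV L.PU L.PU1 L.PU2 L.PX1 L.PX2

/-- The region `R_1` of Theorem 2: the convex hull of the union, over all auxiliary
joint laws, of `R_{11} ∪ R_{12} ∪ R_{13}`. -/
def RegionR1 (PS : AS → ℝ) (W : A1 → A2 → AS → AY × AZ → ℝ) : Set (ℝ × ℝ) :=
  convexHull ℝ {R | ∃ L : AuxLawR1 A1 A2 AS AY AZ,
    R ∈ regionR11 (L.joint PS W) ∪ regionR12 (L.joint PS W) ∪ regionR13 (L.joint PS W)}

section AuxR2
variable {U1 U2 : Type} [Fintype U1] [Fintype U2] [DecidableEq U1] [DecidableEq U2]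

/-- The joint pmf `P_S P_{U1} P_{U2} P_{X1|U1S} P_{X2|U2S} W`. -/
def jointR2 (PS : AS → ℝ) (W : A1 → A2 → AS → AY × AZ → ℝ) (PU1 : U1 → ℝ)
    (PU2 : U2 → ℝ) (PX1 : U1 → AS → A1 → ℝ) (PX2 : U2 → AS → A2 → ℝ) :
    O7 U1 U2 A1 A2 AS AY AZ → ℝ :=
  fun ω => PS ω.s * PU1 ω.u1 * PU2 ω.u2 * PX1 ω.u1 ω.s ω.x1 * PX2 ω.u2 ω.s ω.x2 *
    W ω.x1 ω.x2 ω.s (ω.y, ω.z)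

/-- The region `R_{21}`. -/
def regionR21 (p : O7 U1 U2 A1 A2 AS AY AZ → ℝ) : Set (ℝ × ℝ) :=
  {R | 0 ≤ R.1 ∧ 0 ≤ R.2 ∧ ∃ r11 r12 r21 r22 : ℝ,
    0 ≤ r11 ∧ 0 ≤ r12 ∧ 0 ≤ r21 ∧ 0 ≤ r22 ∧
    r11 + r12 + r21 + r22 ≤ Hc p (fun ω => ω.s) (fun ω => ω.z) ∧
    Hc p (fun ω => ω.s) (fun ω => (ω.y, ω.u1, ω.u2)) ≤ r12 + r22 ∧
    R.1 ≤ min (cMI p (fun ω => ω.u1) (fun ω => ω.y) (fun ω => ω.u2) -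
        cMI p (fun ω => ω.u1) (fun ω => ω.z) (fun ω => ω.s) + r11)
      (cMI p (fun ω => ω.u1) (fun ω => ω.y) (fun ω => ω.u2) - r12) ∧
    R.2 ≤ min (cMI p (fun ω => ω.u2) (fun ω => ω.y) (fun ω => ω.u1) -
        cMI p (fun ω => ω.u2) (fun ω => ω.z) (fun ω => ω.s) + r21)
      (cMI p (fun ω => ω.u2) (fun ω => ω.y) (fun ω => ω.u1) - r22) ∧
    R.1 + R.2 ≤ min (MI p (fun ω => (ω.u1, ω.u2)) (fun ω => ω.y) -
        cMI p (fun ω => (ω.u1, ω.u2)) (fun ω => ω.z) (fun ω => ω.s) +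
        Hc p (fun ω => ω.s) (fun ω => ω.z) -
        Hc p (fun ω => ω.s) (fun ω => (ω.u1, ω.u2, ω.y)))
      (MI p (fun ω => (ω.u1, ω.u2)) (fun ω => ω.y) -
        Hc p (fun ω => ω.s) (fun ω => (ω.u1, ω.u2, ω.y)))}

/-- The region `R_{22}` (wiretap coding not available at Encoder 1). -/
def regionR22 (p : O7 U1 U2 A1 A2 AS AY AZ → ℝ) : Set (ℝ × ℝ) :=
  {R | 0 ≤ R.1 ∧ 0 ≤ R.2 ∧ ∃ r11 r12 r21 r22 : ℝ,
    0 ≤ r11 ∧ 0 ≤ r12 ∧ 0 ≤ r21 ∧ 0 ≤ r22 ∧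
    r11 + r12 + r21 + r22 ≤ Hc p (fun ω => ω.s) (fun ω => (ω.z, ω.u1)) ∧
    Hc p (fun ω => ω.s) (fun ω => (ω.y, ω.u1, ω.u2)) ≤ r12 + r22 ∧
    R.1 ≤ min r11 (cMI p (fun ω => ω.u1) (fun ω => ω.y) (fun ω => ω.u2) - r12) ∧
    R.2 ≤ min (cMI p (fun ω => ω.u2) (fun ω => ω.y) (fun ω => ω.u1) -
        cMI p (fun ω => ω.u2) (fun ω => ω.z) (fun ω => (ω.s, ω.u1)) + r21)
      (cMI p (fun ω => ω.u2) (fun ω => ω.y) (fun ω => ω.u1) - r22) ∧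
    R.1 + R.2 ≤ min (cMI p (fun ω => ω.u2) (fun ω => ω.y) (fun ω => ω.u1) -
        cMI p (fun ω => ω.u2) (fun ω => ω.z) (fun ω => (ω.s, ω.u1)) +
        Hc p (fun ω => ω.s) (fun ω => (ω.z, ω.u1)) -
        Hc p (fun ω => ω.s) (fun ω => (ω.u1, ω.u2, ω.y)))
      (MI p (fun ω => (ω.u1, ω.u2)) (fun ω => ω.y) -
        Hc p (fun ω => ω.s) (fun ω => (ω.u1, ω.u2, ω.y)))}

/-- The region `R_{23}` (wiretap coding not available at Encoder 2). -/
def regionR23 (p : O7 U1 U2 A1 A2 AS AY AZ → ℝ) : Set (ℝ × ℝ) :=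
  {R | 0 ≤ R.1 ∧ 0 ≤ R.2 ∧ ∃ r11 r12 r21 r22 : ℝ,
    0 ≤ r11 ∧ 0 ≤ r12 ∧ 0 ≤ r21 ∧ 0 ≤ r22 ∧
    r11 + r12 + r21 + r22 ≤ Hc p (fun ω => ω.s) (fun ω => (ω.z, ω.u2)) ∧
    Hc p (fun ω => ω.s) (fun ω => (ω.y, ω.u1, ω.u2)) ≤ r12 + r22 ∧
    R.1 ≤ min (cMI p (fun ω => ω.u1) (fun ω => ω.y) (fun ω => ω.u2) -
        cMI p (fun ω => ω.u1) (fun ω => ω.z) (fun ω => (ω.s, ω.u2)) + r11)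
      (cMI p (fun ω => ω.u1) (fun ω => ω.y) (fun ω => ω.u2) - r12) ∧
    R.2 ≤ min r21 (cMI p (fun ω => ω.u2) (fun ω => ω.y) (fun ω => ω.u1) - r22) ∧
    R.1 + R.2 ≤ min (cMI p (fun ω => ω.u1) (fun ω => ω.y) (fun ω => ω.u2) -
        cMI p (fun ω => ω.u1) (fun ω => ω.z) (fun ω => (ω.s, ω.u2)) +
        Hc p (fun ω => ω.s) (fun ω => (ω.z, ω.u2)) -
        Hc p (fun ω => ω.s) (fun ω => (ω.u1, ω.u2, ω.y)))
      (MI p (fun ω => (ω.u1, ω.u2)) (fun ω => ω.y) -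
        Hc p (fun ω => ω.s) (fun ω => (ω.u1, ω.u2, ω.y)))}

end AuxR2

/-- The joint law determined by an auxiliary-law datum for Coding scheme 2. -/
def AuxLawR2.joint (L : AuxLawR2 A1 A2 AS AY AZ) (PS : AS → ℝ)
    (W : A1 → A2 → AS → AY × AZ → ℝ) : O7 L.U1 L.U2 A1 A2 AS AY AZ → ℝ :=
  jointR2 PS W L.PU1 L.PU2 L.PX1 L.PX2

/-- The region `R_2` of Theorem 2: the convex hull of the union, over all auxiliary
joint laws, of `R_{21} ∪ R_{22} ∪ R_{23}`. -/
def RegionR2 (PS : AS → ℝ) (W : A1 → A2 → AS → AY × AZ → ℝ) : Set (ℝ × ℝ) :=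
  convexHull ℝ {R | ∃ L : AuxLawR2 A1 A2 AS AY AZ,
    R ∈ regionR21 (L.joint PS W) ∪ regionR22 (L.joint PS W) ∪ regionR23 (L.joint PS W)}

/-- The Bernoulli(`p`) state pmf on `Bool` (`true` has probability `p`). -/
def PSp (p : ℝ) : Bool → ℝ := fun s => if s then p else 1 - p

/-- The deterministic channel of Example 1, first model: `Y = X1` if `S = 0`, `Y = X2`
if `S = 1`, and `Z = X2`. -/
def Wex1 : Bool → Bool → Bool → Bool × Bool → ℝ :=
  fun x1 x2 s yz => if yz.1 = cond s x2 x1 ∧ yz.2 = x2 then 1 else 0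

/-! ### Entropies of functions of a random variable -/

lemma law_comp {Ω α β : Type*} [Fintype Ω] [Fintype α] [DecidableEq α] [DecidableEq β]
    (p : Ω → ℝ) (X : Ω → α) (g : α → β) :
    law p (fun ω => g (X ω)) = law (law p X) g := by
  funext b
  simp only [law]
  have : ∀ a, (if g a = b then ∑ ω, (if X ω = a then p ω else 0) else 0) =
      ∑ ω, if X ω = a then (if g a = b then p ω else 0) else 0 := by
    intro a
    split_ifs <;> simp
  simp_rw [this]
  rw [Finset.sum_comm]
  simp

/-- The entropy of a function of `X` depends only on the law of `X`. This transfers every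
information quantity to the smallest space carrying the variables involved. -/
lemma H_comp {Ω α β : Type*} [Fintype Ω] [Fintype α] [Fintype β] [DecidableEq α]
    [DecidableEq β] (p : Ω → ℝ) (X : Ω → α) (g : α → β) :
    H p (fun ω => g (X ω)) = H (law p X) g := by
  simp only [H, law_comp p X g]

/-! ### The rate pair lies in the first region -/

lemma hb_eq (p : ℝ) : hb p = Real.binEntropy p / Real.log 2 := by
  simp only [hb, Real.binEntropy, Real.logb, Real.log_inv]
  ring

lemma hb_le_one (p : ℝ) : hb p ≤ 1 := by
  rw [hb_eq, div_le_one (Real.log_pos one_lt_two)]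
  exact Real.binEntropy_le_log_two

/-- The law of `(S, U1, U2)` for `S` Bernoulli(`p`) and independent fair bits `U1`, `U2`. -/
def baseLaw (p : ℝ) : Bool × Bool × Bool → ℝ := fun t => PSp p t.1 / 4

/-- All nine variables as functions of `(S, U1, U2)`, for `V = S`, constant `U`, `X1 = U1`
and `X2 = U2`. -/
def baseMap (t : Bool × Bool × Bool) :
    O9 Bool Unit Bool Bool Bool Bool Bool Bool Bool :=
  (t.1, (), t.2.1, t.2.2, t.2.1, t.2.2, t.1, cond t.1 t.2.2 t.2.1, t.2.2)

set_option synthInstance.maxSize 1000 in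
-- The nested product exceeds the default size limit of instance search.
instance : DecidableEq (O9 Bool Unit Bool Bool Bool Bool Bool Bool Bool) :=
  inferInstance

/-- The choice `V = S`, `U` constant, `X1 = U1`, `X2 = U2` with `U1`, `U2` fair bits. -/
def auxR1 : AuxLawR1 Bool Bool Bool Bool Bool where
  V := Bool
  U := Unit
  U1 := Bool
  U2 := Bool
  PV := fun s v => if v = s then 1 else 0
  PU := fun _ => 1
  PU1 := fun _ _ => 1 / 2
  PU2 := fun _ _ => 1 / 2
  PX1 := fun _ u1 _ x => if x = u1 then 1 else 0
  PX2 := fun _ u2 _ x => if x = u2 then 1 else 0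
  hPV := fun s => ⟨fun v => by positivity, by simp⟩
  hPU := ⟨fun _ => by positivity, by simp⟩
  hPU1 := fun _ => ⟨fun _ => by positivity, by simp⟩
  hPU2 := fun _ => ⟨fun _ => by positivity, by simp⟩
  hPX1 := fun _ _ _ => ⟨fun _ => by positivity, by simp⟩
  hPX2 := fun _ _ _ => ⟨fun _ => by positivity, by simp⟩

/-- The joint law induced by `auxR1`, with its alphabets spelled out. -/
def jointAuxR1 (p : ℝ) : O9 Bool Unit Bool Bool Bool Bool Bool Bool Bool → ℝ :=
  jointR1 (PSp p) Wex1 (fun s v => if v = s then 1 else 0) (fun _ => 1) (fun _ _ => 1 / 2)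
    (fun _ _ => 1 / 2) (fun _ u1 _ x => if x = u1 then 1 else 0)
    (fun _ u2 _ x => if x = u2 then 1 else 0)

lemma jointAuxR1_eq (p : ℝ) :
    jointAuxR1 p = law (baseLaw p) baseMap := by
  funext ⟨v, u, u1, u2, x1, x2, s, y, z⟩
  have h : law (baseLaw p) baseMap (v, u, u1, u2, x1, x2, s, y, z) =
      if baseMap (s, u1, u2) = (v, u, u1, u2, x1, x2, s, y, z) then PSp p s / 4 else 0 := by
    unfold law
    rw [Finset.sum_eq_single (s, u1, u2)]
    · rfl
    · rintro ⟨s', a, b⟩ - hne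
      refine if_neg fun h => hne ?_
      simp only [baseMap, Prod.mk.injEq] at h
      simp only [Prod.mk.injEq]
      tauto
    · simp
  rw [h]
  simp only [jointAuxR1, jointR1, O9.v, O9.u1, O9.u2, O9.x1, O9.x2, O9.s,
    O9.y, O9.z, baseMap, Prod.mk.injEq, Wex1]
  by_cases h1 : v = s
  · by_cases h2 : x1 = u1
    · by_cases h3 : x2 = u2
      · subst h1 h2 h3
        by_cases h4 : y = cond v x2 x1
        · by_cases h5 : z = x2
          · simp [h4, h5]; ring
          · simp [h5, Ne.symm h5]
        · simp [h4, Ne.symm h4]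
      · simp [h3, Ne.symm h3]
    · simp [h2, Ne.symm h2]
  · simp [h1, Ne.symm h1]

lemma logb_div_pow (x : ℝ) (hx : 0 < x) (n : ℕ) :
    Real.logb 2 (x / 2 ^ n) = Real.logb 2 x - n := by
  rw [Real.logb_div hx.ne' (by positivity), Real.logb_pow, Real.logb_self_eq_one one_lt_two,
    mul_one]

set_option linter.unusedSimpArgs false in
/-- Taking `V = S`, the third subregion yields the rate `min(I(U1;Y|S,U2), H(Y) - H(S))`, which
is `min(1-p, 1-h(p))`; encoder 2 sends noise, and `Z = X2` reveals nothing about `U1`. -/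
theorem mem_R1 (p : ℝ) (hp0 : 0 < p) (hp1 : p < 1) :
    (min (1 - p) (1 - hb p), (0 : ℝ)) ∈ RegionR1 (PSp p) Wex1 := by
  apply subset_convexHull
  refine ⟨auxR1, Or.inr ?_⟩
  change _ ∈ regionR13 (jointAuxR1 p)
  rw [jointAuxR1_eq]
  have hq : 0 < 1 - p := by linarith
  have e4 : ∀ x : ℝ, 0 < x → Real.logb 2 (x / 4) = Real.logb 2 x - 2 := fun x hx => by
    have := logb_div_pow x hx 2; norm_num at this; exact this
  have e2 : ∀ x : ℝ, 0 < x → Real.logb 2 (x / 2) = Real.logb 2 x - 1 := fun x hx => by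
    have := logb_div_pow x hx 1; norm_num at this; exact this
  have key : ∀ {β : Type} [Fintype β] [DecidableEq β]
      (g : O9 Bool Unit Bool Bool Bool Bool Bool Bool Bool → β),
      H (law (baseLaw p) baseMap) g = H (baseLaw p) (fun t => g (baseMap t)) :=
    fun g => (H_comp _ _ g).symm
  -- The identities that simplify the marginal masses of `baseLaw` and their logarithms.
  have s1 : ∀ x : ℝ, x / 4 + x / 4 = x / 2 := fun x => by ring
  have s2 : p / 2 + (1 - p) / 2 = 1 / 2 := by ring
  have l2 : Real.logb 2 (1 / 2) = -1 := by simp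
  have c1 : MI (law (baseLaw p) baseMap) (fun ω => ω.v) (fun ω => ω.y) = 0 := by
    simp only [MI, key]
    simp [H, ent, law, baseLaw, baseMap, PSp, O9.v, O9.y, Fintype.sum_prod_type,
      -one_div, s1, s2, l2, e2 p hp0, e2 (1 - p) hq, e4 p hp0, e4 (1 - p) hq]
    ring
  have c2 : MI (law (baseLaw p) baseMap) (fun ω => ω.v) (fun ω => (ω.z, ω.u, ω.u2)) = 0 := by
    simp only [MI, key]
    simp [H, ent, law, baseLaw, baseMap, PSp, O9.v, O9.z, O9.u, O9.u2, Fintype.sum_prod_type,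
      -one_div, s1, s2, l2, e2 p hp0, e2 (1 - p) hq, e4 p hp0, e4 (1 - p) hq]
    ring
  have c3 : cMI (law (baseLaw p) baseMap) (fun ω => ω.u1) (fun ω => ω.y)
      (fun ω => (ω.v, ω.u, ω.u2)) = 1 - p := by
    simp only [cMI, Hc, key]
    simp [H, ent, law, baseLaw, baseMap, PSp, O9.v, O9.u, O9.u1, O9.u2, O9.y,
      Fintype.sum_prod_type,
      -one_div, s1, s2, l2, e2 p hp0, e2 (1 - p) hq, e4 p hp0, e4 (1 - p) hq]
    ring
  have c4 : cMI (law (baseLaw p) baseMap) (fun ω => ω.u1) (fun ω => ω.z)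
      (fun ω => (ω.s, ω.u, ω.u2)) = 0 := by
    simp only [cMI, Hc, key]
    simp [H, ent, law, baseLaw, baseMap, PSp, O9.s, O9.u, O9.u1, O9.u2, O9.z,
      Fintype.sum_prod_type,
      -one_div, s1, s2, l2, e2 p hp0, e2 (1 - p) hq, e4 p hp0, e4 (1 - p) hq]
    ring
  have c5 : cMI (law (baseLaw p) baseMap) (fun ω => ω.u2) (fun ω => ω.y)
      (fun ω => (ω.v, ω.u, ω.u1)) = p := by
    simp only [cMI, Hc, key]
    simp [H, ent, law, baseLaw, baseMap, PSp, O9.v, O9.u, O9.u1, O9.u2, O9.y,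
      Fintype.sum_prod_type,
      -one_div, s1, s2, l2, e2 p hp0, e2 (1 - p) hq, e4 p hp0, e4 (1 - p) hq]
    ring
  have c6 : Rsum (law (baseLaw p) baseMap) = min 1 (1 - hb p) := by
    unfold Rsum
    refine congrArg₂ min ?_ ?_
    · simp only [cMI, Hc, key]
      simp [H, ent, law, baseLaw, baseMap, PSp, O9.v, O9.u, O9.u1, O9.u2, O9.y,
        Fintype.sum_prod_type,
        -one_div, s1, s2, l2, e2 p hp0, e2 (1 - p) hq, e4 p hp0, e4 (1 - p) hq]
      ring
    · simp only [MI, key]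
      simp [H, ent, law, baseLaw, baseMap, PSp, O9.v, O9.u, O9.u1, O9.u2, O9.y, O9.s, hb,
        Fintype.sum_prod_type,
        -one_div, s1, s2, l2, e2 p hp0, e2 (1 - p) hq, e4 p hp0, e4 (1 - p) hq]
      ring
  have hh := hb_le_one p
  refine ⟨le_min hq.le (by linarith), le_rfl, 0, 0, le_rfl, le_rfl, ?_, ?_, ?_, ?_⟩
  · rw [c1, c2]; norm_num
  · simp only [c3, c4]; simp
  · simp only [c5]; simp [hp0.le]
  · simp only [c3, c4, c6]
    simp only [sub_zero, add_zero, min_self, le_min_iff]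
    have h1 := min_le_left (1 - p) (1 - hb p)
    have h2 := min_le_right (1 - p) (1 - hb p)
    exact ⟨⟨by linarith, h2⟩, h1⟩

/-! ### An upper bound on `I(U1;Y|U2)` -/

lemma xlogb_mul (x y : ℝ) : x * y * Real.logb 2 (x * y) =
    x * (y * Real.logb 2 y) + y * (x * Real.logb 2 x) := by
  rcases eq_or_ne x 0 with rfl | hx
  · simp
  rcases eq_or_ne y 0 with rfl | hy
  · simp
  rw [Real.logb_mul hx hy]
  ring

/-- Gibbs' inequality, termwise. -/
lemma xlogb_gibbs {x r : ℝ} (hx : 0 ≤ x) (hr : 0 < r) :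
    x * Real.logb 2 r - x * Real.logb 2 x ≤ (r - x) / Real.log 2 := by
  rcases hx.eq_or_lt with rfl | hx
  · have := Real.log_pos one_lt_two
    simp only [zero_mul, sub_zero]
    positivity
  have h := Real.log_le_sub_one_of_pos (div_pos hr hx)
  rw [Real.log_div hr.ne' hx.ne'] at h
  have h2 : x * (Real.log r - Real.log x) ≤ r - x := by
    calc x * (Real.log r - Real.log x) ≤ x * (r / x - 1) := by gcongr
      _ = r - x := by field_simp
  calc x * Real.logb 2 r - x * Real.logb 2 x
      = x * (Real.log r - Real.log x) / Real.log 2 := by simp only [Real.logb]; ring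
    _ ≤ _ := by gcongr

/-- The bound of relative entropy by the χ²-divergence, termwise. -/
lemma xlogb_chi {x r : ℝ} (hx : 0 ≤ x) (hr : 0 < r) :
    x * Real.logb 2 x - x * Real.logb 2 r ≤ x * (x / r - 1) / Real.log 2 := by
  rcases hx.eq_or_lt with rfl | hx
  · simp
  have h := Real.log_le_sub_one_of_pos (div_pos hx hr)
  rw [Real.log_div hx.ne' hr.ne'] at h
  calc x * Real.logb 2 x - x * Real.logb 2 r
      = x * (Real.log x - Real.log r) / Real.log 2 := by simp only [Real.logb]; ring
    _ ≤ _ := by gcongr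

/-- For independent inputs `P`, `Q` and a channel `K`, the information `I(A;Y|B)` is the
`Q`-average of `H(Y|B = b) - H(Y|A, B = b)`. -/
lemma cMI_product {α β : Type} [Fintype α] [Fintype β] [DecidableEq α] [DecidableEq β]
    (P : α → ℝ) (Q : β → ℝ) (K : α → β → Bool → ℝ) (hP : IsPmf P)
    (hK : ∀ a b, IsPmf (K a b)) :
    cMI (fun t : α × Bool × β => P t.1 * Q t.2.2 * K t.1 t.2.2 t.2.1)
      (fun t => t.1) (fun t => t.2.1) (fun t => t.2.2) =
    ∑ b, Q b * (∑ a, P a * ∑ y, K a b y * Real.logb 2 (K a b y) -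
      ∑ y, (∑ a, P a * K a b y) * Real.logb 2 (∑ a, P a * K a b y)) := by
  have hK' : ∀ a b, ∑ y, K a b y = 1 := fun a b => (hK a b).2
  set q : α × Bool × β → ℝ := fun t => P t.1 * Q t.2.2 * K t.1 t.2.2 t.2.1 with hq
  have l1 : law q (fun t => (t.1, t.2.2)) = fun t => P t.1 * Q t.2 := by
    funext ⟨a, b⟩
    simp only [law, hq, Fintype.sum_prod_type, Prod.mk.injEq, ite_and]
    have : ∀ x : α, (∑ y : Bool, ∑ z : β, if x = a then
        (if z = b then P x * Q z * K x z y else 0) else 0) =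
        if x = a then ∑ y : Bool, P a * Q b * K a b y else 0 := by
      intro x; split_ifs with h <;> simp [h]
    simp_rw [this]
    simp only [← Finset.mul_sum, hK', mul_one, Finset.sum_ite_eq', Finset.mem_univ, if_true]
  have l2 : law q (fun t => (t.2.1, t.2.2)) = fun t => Q t.2 * ∑ a, P a * K a t.2 t.1 := by
    funext ⟨y, b⟩
    simp only [law, hq, Fintype.sum_prod_type, Prod.mk.injEq, ite_and]
    rw [Finset.mul_sum]
    refine Finset.sum_congr rfl fun x _ => ?_
    have : ∀ w : Bool, (∑ z : β, if w = y then
        (if z = b then P x * Q z * K x z w else 0) else 0) =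
        if w = y then P x * Q b * K x b y else 0 := by
      intro w; split_ifs with h <;> simp [h]
    simp_rw [this]
    rw [Finset.sum_ite_eq']
    simp; ring
  have l3 : law q (fun t => t.2.2) = Q := by
    rw [law_comp q (fun t => (t.1, t.2.2)) Prod.snd, l1]
    funext b
    simp only [law, Fintype.sum_prod_type, Finset.sum_ite_eq', Finset.mem_univ, if_true,
      ← Finset.sum_mul, hP.2, one_mul]
  have l4 : law q (fun t => (t.1, t.2.1, t.2.2)) = q := by
    funext t
    simp [law]
  have E1 : ∑ t : α × Bool × β, q t * Real.logb 2 (q t) =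
      ∑ b, Q b * ∑ a, P a * (∑ y, K a b y * Real.logb 2 (K a b y)) +
        ∑ t : α × β, P t.1 * Q t.2 * Real.logb 2 (P t.1 * Q t.2) := by
    simp only [hq, Fintype.sum_prod_type, xlogb_mul (_ * _) (K _ _ _)]
    rw [Finset.sum_congr rfl fun b _ => Finset.mul_sum _ _ _,
      Finset.sum_comm (s := (Finset.univ : Finset β)), ← Finset.sum_add_distrib]
    refine Finset.sum_congr rfl fun a _ => ?_
    rw [Finset.sum_comm, ← Finset.sum_add_distrib]
    refine Finset.sum_congr rfl fun b _ => ?_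
    rw [Finset.sum_add_distrib, ← Finset.sum_mul, hK', ← Finset.mul_sum]
    ring
  have E2 : ∑ t : Bool × β, (Q t.2 * ∑ a, P a * K a t.2 t.1) *
        Real.logb 2 (Q t.2 * ∑ a, P a * K a t.2 t.1) =
      ∑ b, Q b * ∑ y, (∑ a, P a * K a b y) * Real.logb 2 (∑ a, P a * K a b y) +
        ∑ b, Q b * Real.logb 2 (Q b) := by
    simp only [Fintype.sum_prod_type, xlogb_mul (Q _)]
    rw [Finset.sum_comm, ← Finset.sum_add_distrib]
    refine Finset.sum_congr rfl fun b _ => ?_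
    have : ∑ y, ∑ a, P a * K a b y = 1 := by
      rw [Finset.sum_comm]
      simp only [← Finset.mul_sum, hK', mul_one, hP.2]
    rw [Finset.sum_add_distrib, ← Finset.sum_mul, this, ← Finset.mul_sum]
    ring
  simp only [cMI, Hc, H, l1, l2, l3, l4, ent]
  rw [E1, E2]
  simp only [mul_sub, Finset.sum_sub_distrib]
  ring

lemma auxR2_law (p : ℝ) (L : AuxLawR2 Bool Bool Bool Bool Bool) :
    law (L.joint (PSp p) Wex1) (fun ω => (ω.u1, ω.y, ω.u2)) = fun t =>
      L.PU1 t.1 * L.PU2 t.2.2 *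
        ((1 - p) * L.PX1 t.1 false t.2.1 + p * L.PX2 t.2.2 true t.2.1) := by
  funext ⟨a, y, b⟩
  have hx1 := (L.hPX1 a true).2
  have hx2 := (L.hPX2 b false).2
  simp only [Fintype.sum_bool] at hx1 hx2
  unfold law
  rw [Fintype.sum_prod_type, Finset.sum_eq_single a, Fintype.sum_prod_type,
    Finset.sum_eq_single b]
  · cases y <;>
    simp [Fintype.sum_prod_type, O7.u1, O7.u2, O7.y, O7.s, O7.z, O7.x1, O7.x2,
      AuxLawR2.joint, jointR2, Wex1, PSp]
    · linear_combination L.PU1 a * L.PU2 b * ((1 - p) * L.PX1 a false false * hx2 +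
        p * L.PX2 b true false * hx1)
    · linear_combination L.PU1 a * L.PU2 b * ((1 - p) * L.PX1 a false true * hx2 +
        p * L.PX2 b true true * hx1)
  · intro b' _ hb
    exact Finset.sum_eq_zero fun w _ => if_neg fun h => hb (by
      simp only [Prod.mk.injEq] at h; exact h.2.2)
  · simp
  · intro a' _ ha
    exact Finset.sum_eq_zero fun w _ => if_neg fun h => ha (by
      simp only [Prod.mk.injEq] at h; exact h.1)
  · simp

/-- The relative entropy of a binary law `(x, x')` to a binary law `(r, r')` is at most
`0.97 (1-p)` if the two laws differ by at most `(1-p)/2`, both reference masses are at least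
`(1-p)/2`, and `p ≥ 1/2`. -/
lemma kl_mid_bound {p x x' r r' : ℝ} (hp : 1 / 2 ≤ p) (hp1 : p < 1) (hx : 0 ≤ x)
    (hx' : 0 ≤ x') (hxx : x + x' = 1) (hrr : r + r' = 1) (hr : (1 - p) / 2 ≤ r)
    (hr' : (1 - p) / 2 ≤ r') (h1 : x - r ≤ (1 - p) / 2) (h2 : r - x ≤ (1 - p) / 2) :
    x * Real.logb 2 x + x' * Real.logb 2 x' - (x * Real.logb 2 r + x' * Real.logb 2 r') ≤
      97 / 100 * (1 - p) := by
  have hr0 : 0 < r := by linarith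
  have hr0' : 0 < r' := by linarith
  have hl := Real.log_two_gt_d9
  have hl0 : 0 < Real.log 2 := by linarith
  have A := xlogb_chi hx hr0
  have B := xlogb_chi hx' hr0'
  have C : x * (x / r - 1) / Real.log 2 + x' * (x' / r' - 1) / Real.log 2 =
      (x - r) ^ 2 / (r * r') / Real.log 2 := by
    obtain rfl : x' = 1 - x := by linarith
    obtain rfl : r' = 1 - r := by linarith
    field_simp
    ring
  have D : (x - r) ^ 2 / (r * r') / Real.log 2 ≤ 97 / 100 * (1 - p) := by
    rw [div_div, div_le_iff₀ (by positivity)]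
    have hsq : (x - r) ^ 2 ≤ ((1 - p) / 2) ^ 2 := by
      apply sq_le_sq' <;> linarith
    have hprod : (1 - p) / 2 * (3 / 4) ≤ r * r' := by
      obtain rfl : r' = 1 - r := by linarith
      nlinarith
    have : (1 - p) / 2 * (3 / 4) * (69 / 100) ≤ r * r' * Real.log 2 := by
      apply mul_le_mul hprod (by linarith) (by norm_num) (by positivity)
    nlinarith
  linarith

/-- Comparing `Y` with the reference law obtained by replacing `X1` with a fair bit shows that
the first user's information is at most a fraction `0.97` of the probability that `S = 0`. -/
lemma cMI_le (p : ℝ) (hp : 1 / 2 ≤ p) (hp1 : p < 1) (L : AuxLawR2 Bool Bool Bool Bool Bool) :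
    cMI (L.joint (PSp p) Wex1) (fun ω => ω.u1) (fun ω => ω.y) (fun ω => ω.u2) ≤
      97 / 100 * (1 - p) := by
  set K : L.U1 → L.U2 → Bool → ℝ :=
    fun a b y => (1 - p) * L.PX1 a false y + p * L.PX2 b true y with hKdef
  have hq : 0 < 1 - p := by linarith
  have hp0 : 0 < p := by linarith
  have hK : ∀ a b, IsPmf (K a b) := by
    intro a b
    refine ⟨fun y => ?_, ?_⟩
    · have := (L.hPX1 a false).1 y
      have := (L.hPX2 b true).1 y
      positivity
    · simp only [hKdef, Finset.sum_add_distrib, ← Finset.mul_sum, (L.hPX1 a false).2,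
        (L.hPX2 b true).2]
      ring
  have e : cMI (L.joint (PSp p) Wex1) (fun ω => ω.u1) (fun ω => ω.y) (fun ω => ω.u2) =
      cMI (fun t : L.U1 × Bool × L.U2 => L.PU1 t.1 * L.PU2 t.2.2 * K t.1 t.2.2 t.2.1)
      (fun t => t.1) (fun t => t.2.1) (fun t => t.2.2) := by
    simp only [cMI, Hc, hKdef, ← auxR2_law p L, ← H_comp]
  rw [e, cMI_product L.PU1 L.PU2 K L.hPU1 hK]
  have main : ∀ b, ∑ a, L.PU1 a * ∑ y, K a b y * Real.logb 2 (K a b y) -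
      ∑ y, (∑ a, L.PU1 a * K a b y) * Real.logb 2 (∑ a, L.PU1 a * K a b y) ≤
        97 / 100 * (1 - p) := by
    intro b
    set r : Bool → ℝ := fun y => (1 - p) / 2 + p * L.PX2 b true y with hr
    have hrge : ∀ y, (1 - p) / 2 ≤ r y := fun y => by
      have := mul_nonneg hp0.le ((L.hPX2 b true).1 y)
      simp only [hr]; linarith
    have hrpos : ∀ y, 0 < r y := fun y => by linarith [hrge y]
    have hrsum : r true + r false = 1 := by
      have := (L.hPX2 b true).2
      simp only [Fintype.sum_bool] at this
      simp only [hr]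
      linear_combination p * this
    set m : Bool → ℝ := fun y => ∑ a, L.PU1 a * K a b y with hm
    have hm0 : ∀ y, 0 ≤ m y := fun y =>
      Finset.sum_nonneg fun a _ => mul_nonneg (L.hPU1.1 a) ((hK a b).1 y)
    have hmsum : m true + m false = 1 := by
      simp only [hm, ← Finset.sum_add_distrib, ← mul_add]
      have : ∀ a, K a b true + K a b false = 1 := fun a => by
        simpa [Fintype.sum_bool] using (hK a b).2
      simp only [this, mul_one, L.hPU1.2]
    have G : ∑ y, m y * Real.logb 2 (r y) ≤ ∑ y, m y * Real.logb 2 (m y) := by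
      have h1 := xlogb_gibbs (hm0 true) (hrpos true)
      have h2 := xlogb_gibbs (hm0 false) (hrpos false)
      have h3 : (r true - m true) / Real.log 2 + (r false - m false) / Real.log 2 = 0 := by
        rw [← add_div, show r true - m true + (r false - m false) = 0 by linarith, zero_div]
      simp only [Fintype.sum_bool]
      linarith
    have M : ∑ y, m y * Real.logb 2 (r y) =
        ∑ a, L.PU1 a * ∑ y, K a b y * Real.logb 2 (r y) := by
      simp only [hm, Finset.sum_mul, Finset.mul_sum, mul_assoc]
      exact Finset.sum_comm
    have T : ∀ a, ∑ y, K a b y * Real.logb 2 (K a b y) - ∑ y, K a b y * Real.logb 2 (r y) ≤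
        97 / 100 * (1 - p) := by
      intro a
      have hs := (L.hPX1 a false).2
      have ht := (L.hPX1 a false).1 true
      have hf := (L.hPX1 a false).1 false
      have hks := (hK a b).2
      simp only [Fintype.sum_bool] at hs hks ⊢
      apply kl_mid_bound hp hp1 ((hK a b).1 true) ((hK a b).1 false) hks hrsum (hrge _) (hrge _)
      · simp only [hKdef, hr]; nlinarith
      · simp only [hKdef, hr]; nlinarith
    calc _ ≤ ∑ a, L.PU1 a * ∑ y, K a b y * Real.logb 2 (K a b y) -
          ∑ a, L.PU1 a * ∑ y, K a b y * Real.logb 2 (r y) := by rw [← M]; linarith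
      _ = ∑ a, L.PU1 a * (∑ y, K a b y * Real.logb 2 (K a b y) -
            ∑ y, K a b y * Real.logb 2 (r y)) := by
          simp only [mul_sub, Finset.sum_sub_distrib]
      _ ≤ ∑ a, L.PU1 a * (97 / 100 * (1 - p)) :=
          Finset.sum_le_sum fun a _ => mul_le_mul_of_nonneg_left (T a) (L.hPU1.1 a)
      _ = 97 / 100 * (1 - p) := by rw [← Finset.sum_mul, L.hPU1.2, one_mul]
  calc _ ≤ ∑ b, L.PU2 b * (97 / 100 * (1 - p)) :=
        Finset.sum_le_sum fun b _ => mul_le_mul_of_nonneg_left (main b) (L.hPU2.1 b)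
    _ = 97 / 100 * (1 - p) := by rw [← Finset.sum_mul, L.hPU2.2, one_mul]

/-! ### The second region -/

/-- The first rates admitted by `I(U1;Y|U2)` for some law form a lower set of `ℝ`, hence a
convex set, so the bound survives the passage to the convex hull. -/
lemma R2_bound (p R1 R2 : ℝ) (h : (R1, R2) ∈ RegionR2 (PSp p) Wex1) :
    ∃ L : AuxLawR2 Bool Bool Bool Bool Bool,
      R1 ≤ cMI (L.joint (PSp p) Wex1) (fun ω => ω.u1) (fun ω => ω.y) (fun ω => ω.u2) := by
  let T : Set ℝ := {x | ∃ L : AuxLawR2 Bool Bool Bool Bool Bool,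
    x ≤ cMI (L.joint (PSp p) Wex1) (fun ω => ω.u1) (fun ω => ω.y) (fun ω => ω.u2)}
  have hT : IsLowerSet T := fun a b hab ⟨L, hL⟩ => ⟨L, hab.trans hL⟩
  have hconv : Convex ℝ (Prod.fst ⁻¹' T : Set (ℝ × ℝ)) :=
    hT.ordConnected.convex.is_linear_preimage (LinearMap.fst ℝ ℝ ℝ).isLinear
  refine convexHull_min ?_ hconv h
  rintro R ⟨L, (hR | hR) | hR⟩ <;>
  · obtain ⟨-, -, r11, r12, r21, r22, -, h12, -, -, -, -, hR1, -, -⟩ := hR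
    exact ⟨L, by linarith [hR1.trans (min_le_right _ _)]⟩

/-- Near `p = 1` one has `h(p) < p`, because `h` is continuous and `h(1) = 0`. -/
lemma exists_hb_le : ∃ p0 : ℝ, 1 / 2 ≤ p0 ∧ p0 < 1 ∧ ∀ p, p0 < p → p < 1 → hb p ≤ p := by
  have hc : Continuous hb := by
    rw [show hb = fun p => Real.binEntropy p / Real.log 2 from funext hb_eq]
    fun_prop
  have h1 : hb 1 < 1 := by simp [hb]
  have := (isOpen_lt hc continuous_id).mem_nhds (show (1 : ℝ) ∈ {p | hb p < p} from h1)
  obtain ⟨δ, hδ, hball⟩ := Metric.mem_nhds_iff.1 this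
  refine ⟨max (1 / 2) (1 - δ), le_max_left _ _, by simp [hδ]; norm_num, fun p hp hp1 => ?_⟩
  have hpδ := (le_max_right _ _).trans_lt hp
  have : p ∈ Metric.ball (1 : ℝ) δ := by
    rw [Metric.mem_ball, Real.dist_eq, abs_lt]
    constructor <;> linarith
  exact (hball this).le

/-- **Example 1, first channel (Coding scheme 1 beats Coding scheme 2).**
The rate pair `(min{1-p, 1-h(p)}, 0)` lies in `R_1`; every pair `(R1, 0)` in `R_2` is
bounded by `I(U1;Y|U2)` for some admissible law; and for `p` sufficiently large
`I(U1;Y|U2) < min{1-p, 1-h(p)}` for every admissible law, so the above pair is not in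
`R_2`. -/
theorem example1_first_channel :
    (∀ p : ℝ, 0 < p → p < 1 →
      (min (1 - p) (1 - hb p), (0 : ℝ)) ∈ RegionR1 (PSp p) Wex1) ∧
    (∀ p : ℝ, 0 < p → p < 1 → ∀ R1 : ℝ, (R1, (0 : ℝ)) ∈ RegionR2 (PSp p) Wex1 →
      ∃ L : AuxLawR2 Bool Bool Bool Bool Bool,
        R1 ≤ cMI (L.joint (PSp p) Wex1) (fun ω => ω.u1) (fun ω => ω.y)
          (fun ω => ω.u2)) ∧
    (∃ p0 : ℝ, p0 < 1 ∧ ∀ p : ℝ, p0 < p → p < 1 →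
      (∀ L : AuxLawR2 Bool Bool Bool Bool Bool,
        cMI (L.joint (PSp p) Wex1) (fun ω => ω.u1) (fun ω => ω.y) (fun ω => ω.u2) <
          min (1 - p) (1 - hb p)) ∧
      (min (1 - p) (1 - hb p), (0 : ℝ)) ∉ RegionR2 (PSp p) Wex1) := by
  refine ⟨mem_R1, fun p _ _ R1 h => R2_bound p R1 0 h, ?_⟩
  obtain ⟨p0, h0, h01, hp0⟩ := exists_hb_le
  refine ⟨p0, h01, fun p hp hp1 => ?_⟩
  have key : ∀ L : AuxLawR2 Bool Bool Bool Bool Bool,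
      cMI (L.joint (PSp p) Wex1) (fun ω => ω.u1) (fun ω => ω.y) (fun ω => ω.u2) <
        min (1 - p) (1 - hb p) := by
    intro L
    have h1 := cMI_le p (by linarith) hp1 L
    have h2 := hp0 p hp hp1
    exact lt_min (by linarith) (by linarith)
  refine ⟨key, fun h => ?_⟩
  obtain ⟨L, hL⟩ := R2_bound p _ _ h
  exact absurd (key L) (not_lt.2 hL)

end Paper
end
end
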